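/- Let N ≥ 2, 1 < p ≤ N, p − 1 < q < q_c, and let a, c₀ > 0. Let φ : (0,1] → (0,∞) be continuous and nonincreasing with φ(r) ≤ a · φ(2r) for all 0 < r ≤ 1/2 and r^{β_q} φ(r) ≤ c₀ for all 0 < r ≤ 1. Then there exist C > 0 and α ∈ (0,1), depending only on N, p, q, a, c₀, such that every strong solution u of (E) on B_1(0) ∖ {0} satisfying |u(x)| ≤ φ(|x|) for all 0 < |x| < 1 obeys: |∇u(x)| ≤ C φ(|x|) |x|^{−1} for all 0 < |x| ≤ 1/2, and |∇u(x) − ∇u(x′)| ≤ C φ(|x|) |x|^{−1−α} |x − x′|^{α} whenever 0 < |x| ≤ |x′| ≤ 1/2. -/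

import Mathlib

open Metric Set Filter Topology MeasureTheory

/-- The vector field `x ↦ |∇u(x)|^{p-2} ∇u(x)`. -/
noncomputable def pGradField {N : ℕ} (p : ℝ) (u : EuclideanSpace ℝ (Fin N) → ℝ)
    (x : EuclideanSpace ℝ (Fin N)) : EuclideanSpace ℝ (Fin N) :=
  ‖gradient u x‖ ^ (p - 2) • gradient u x

/-- A strong solution of `(E) : -Δ_p u + |∇u|^q = 0` on an open set `G ⊆ ℝ^N`. -/
def IsStrongSolution {N : ℕ} (p q : ℝ) (G : Set (EuclideanSpace ℝ (Fin N)))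
    (u : EuclideanSpace ℝ (Fin N) → ℝ) : Prop :=
  ContDiffOn ℝ 1 u G ∧
  ContDiffOn ℝ 3 u {x | x ∈ G ∧ gradient u x ≠ 0} ∧
  ∀ x ∈ G, DifferentiableAt ℝ (pGradField p u) x ∧
    LinearMap.trace ℝ (EuclideanSpace ℝ (Fin N))
      (fderiv ℝ (pGradField p u) x : EuclideanSpace ℝ (Fin N) →ₗ[ℝ] EuclideanSpace ℝ (Fin N))
      = ‖gradient u x‖ ^ q

/-!
Away from its critical points a solution of (E) satisfies `tr (A(∇u) D²u) = |∇u| ^ (q - p + 2)`,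
where `A(P) = I + (p - 2) P ⊗ P / |P| ^ 2` depends only on the direction of `P`. For such equations
regularity is obtained by doubling the variables (Ishii–Lions): at a maximum of
`u x - u y - ψ (x - y)` minus a localization, the two Hessians are tested along directions coupled
by the reflection in `x - y`, so that the concavity of `ψ` produces a strictly negative term. This
gives an interior Lipschitz bound. Applied to a solution with `u x - u y - ⟪Z, x - y⟫ ≤ |x - y|`, it
lowers the Lipschitz constant `1` on a smaller ball, possibly after changing `Z`, and iterating this
improvement of flatness over geometric scales yields a Hölder gradient.

Near the singularity, `u` is rescaled to the unit ball on `ball x (|x| / 2)`. The doubling of `φ`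
bounds the rescaled solution, and the growth condition on `φ` bounds the coefficient which the
rescaling puts in front of the lower-order term; this works because `q < p` when `q < q_c` and
`p ≤ N`.
-/

open scoped RealInnerProductSpace

section SecondOrderExpansion

variable {V W : Type*} [NormedAddCommGroup V] [NormedSpace ℝ V] [NormedAddCommGroup W]
  [NormedSpace ℝ W]

/-- The second-order Peano expansion `f (x + h) = f x + L h + B h h / 2 + o(‖h‖ ^ 2)`. The form `B`
is not required to be symmetric, since only its values on the diagonal matter. -/
def HasTaylorTwoAt (f : V → ℝ) (L : V →L[ℝ] ℝ) (B : V →L[ℝ] V →L[ℝ] ℝ) (x : V) : Prop :=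
  (fun h => f (x + h) - f x - L h - B h h / 2) =o[𝓝 0] fun h => ‖h‖ ^ 2

namespace HasTaylorTwoAt

variable {f g : V → ℝ} {L M : V →L[ℝ] ℝ} {B C : V →L[ℝ] V →L[ℝ] ℝ} {x : V}

theorem add (hf : HasTaylorTwoAt f L B x) (hg : HasTaylorTwoAt g M C x) :
    HasTaylorTwoAt (fun y => f y + g y) (L + M) (B + C) x :=
  (Asymptotics.IsLittleO.add hf hg).congr_left fun h => by
    simp only [add_apply]
    ring

theorem const_mul (c : ℝ) (hf : HasTaylorTwoAt f L B x) :
    HasTaylorTwoAt (fun y => c * f y) (c • L) (c • B) x :=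
  (Asymptotics.IsLittleO.const_mul_left hf c).congr_left fun h => by
    simp only [smul_apply, smul_eq_mul]
    ring

theorem sub (hf : HasTaylorTwoAt f L B x) (hg : HasTaylorTwoAt g M C x) :
    HasTaylorTwoAt (fun y => f y - g y) (L - M) (B - C) x :=
  (Asymptotics.IsLittleO.sub hf hg).congr_left fun h => by
    simp only [sub_apply]
    ring

theorem comp_affine (c : V) (T : W →L[ℝ] V) {w : W} (hf : HasTaylorTwoAt f L B (c + T w)) :
    HasTaylorTwoAt (fun z => f (c + T z)) (L ∘L T) (B.bilinearComp T T) w := by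
  have hT : Tendsto T (𝓝 0) (𝓝 0) := T.continuous.tendsto' 0 0 T.map_zero
  refine ((Asymptotics.IsLittleO.comp_tendsto hf hT).trans_isBigO
    ((T.isBigO_id (𝓝 0)).norm_left.norm_right.pow 2)).congr_left fun h => ?_
  simp only [Function.comp_apply, map_add, add_assoc, ContinuousLinearMap.comp_apply,
    ContinuousLinearMap.bilinearComp_apply]

theorem comp_clm (T : W →L[ℝ] V) {w : W} (hf : HasTaylorTwoAt f L B (T w)) :
    HasTaylorTwoAt (fun z => f (T z)) (L ∘L T) (B.bilinearComp T T) w := by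
  simpa only [zero_add] using comp_affine 0 T (by simpa only [zero_add] using hf)

theorem hasFDerivAt (hf : HasTaylorTwoAt f L B x) : HasFDerivAt f L x := by
  have hsq : (fun h : V => ‖h‖ ^ 2) =o[𝓝 0] fun h => h := by
    simpa using Asymptotics.isLittleO_norm_pow_id (E' := V) one_lt_two
  have hB : (fun h => B h h / 2) =O[𝓝 0] fun h => ‖h‖ ^ 2 :=
    Asymptotics.IsBigO.of_bound (‖B‖ / 2) <| Eventually.of_forall fun h => by
      have := B.le_opNorm₂ h h
      simp only [norm_div, Real.norm_ofNat, norm_pow, norm_norm]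
      linarith
  rw [hasFDerivAt_iff_isLittleO_nhds_zero]
  exact ((hf.add_isBigO hB).trans_isLittleO hsq).congr_left fun h => by ring

theorem nonpos_of_isLocalMax (hf : HasTaylorTwoAt f L B x) (hmax : IsLocalMax f x) (h : V) :
    B h h ≤ 0 := by
  have hL : L = 0 := hmax.hasFDerivAt_eq_zero hf.hasFDerivAt
  have hline : Tendsto (fun s : ℝ => s • h) (𝓝[≠] 0) (𝓝 0) :=
    (tendsto_nhdsWithin_of_tendsto_nhds (Continuous.tendsto' (by fun_prop) 0 0 (zero_smul ℝ h)))
  have hratio : Tendsto (fun s : ℝ => (f (x + s • h) - f x) / s ^ 2) (𝓝[≠] 0) (𝓝 (B h h / 2)) := by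
    have ho : (fun s : ℝ => f (x + s • h) - f x - s ^ 2 * (B h h / 2)) =o[𝓝[≠] 0]
        fun s => s ^ 2 := by
      refine ((Asymptotics.IsLittleO.comp_tendsto hf hline).congr_left fun s => ?_).trans_isBigO
        (.of_bound (‖h‖ ^ 2) (.of_forall fun s => ?_))
      · simp only [Function.comp_apply, hL, map_smul, zero_apply, smul_apply, smul_eq_mul]
        ring
      · simp only [Function.comp_apply, norm_smul, norm_pow, norm_mul, norm_norm]
        exact le_of_eq (by ring)
    have hlim := ho.tendsto_div_nhds_zero.add_const (B h h / 2)
    rw [zero_add] at hlim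
    refine hlim.congr' ?_
    filter_upwards [self_mem_nhdsWithin] with s hs
    have hs' : s ≠ 0 := hs
    field_simp
    ring
  have hnonpos : ∀ᶠ s : ℝ in 𝓝[≠] 0, (f (x + s • h) - f x) / s ^ 2 ≤ 0 := by
    have hx : Tendsto (fun s : ℝ => x + s • h) (𝓝[≠] 0) (𝓝 x) := by
      simpa using hline.const_add x
    filter_upwards [hx.eventually hmax] with s hs
    exact div_nonpos_of_nonpos_of_nonneg (sub_nonpos.2 hs) (sq_nonneg s)
  linarith [le_of_tendsto hratio hnonpos]

theorem of_hasFDerivAt {f' : V → V →L[ℝ] ℝ} (hf : ∀ᶠ y in 𝓝 x, HasFDerivAt f (f' y) y)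
    (hf' : HasFDerivAt f' B x) : HasTaylorTwoAt f (f' x) B x := by
  refine Asymptotics.isLittleO_iff.2 fun c hc => ?_
  obtain ⟨ε, hε, hball⟩ := Metric.eventually_nhds_iff_ball.1
    (hf.and ((hasFDerivAt_iff_isLittleO.1 hf').def hc))
  refine Metric.eventually_nhds_iff_ball.2 ⟨ε, hε, fun h hh => ?_⟩
  have hseg : ∀ s ∈ Icc (0 : ℝ) 1, ‖s • h‖ ≤ ‖h‖ ∧ x + s • h ∈ ball x ε := by
    intro s hs
    have hle : ‖s • h‖ ≤ ‖h‖ := by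
      rw [norm_smul, Real.norm_of_nonneg hs.1]
      exact mul_le_of_le_one_left (norm_nonneg h) hs.2
    exact ⟨hle, by simpa using hle.trans_lt (by simpa using hh)⟩
  have hderiv : ∀ s ∈ Icc (0 : ℝ) 1,
      HasDerivWithinAt (fun s : ℝ => f (x + s • h) - f x - s * f' x h - s ^ 2 * (B h h / 2))
        (f' (x + s • h) h - f' x h - s * B h h) (Icc 0 1) s := by
    intro s hs
    have hline : HasDerivAt (fun s : ℝ => x + s • h) h s := by
      simpa using ((hasDerivAt_id s).smul_const h).const_add x
    refine (((((hball _ (hseg s hs).2).1.comp_hasDerivAt s hline).sub_const (f x)).sub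
      ((hasDerivAt_id s).mul_const (f' x h))).sub
        (((hasDerivAt_id s).pow 2).mul_const (B h h / 2))).congr_deriv ?_ |>.hasDerivWithinAt
    simp only [id, Nat.cast_ofNat, Nat.add_one_sub_one, pow_one]
    ring
  have hbound : ∀ s ∈ Icc (0 : ℝ) 1, ‖f' (x + s • h) h - f' x h - s * B h h‖ ≤ c * ‖h‖ ^ 2 := by
    intro s hs
    have hexp : ‖f' (x + s • h) - f' x - B (s • h)‖ ≤ c * ‖s • h‖ := by
      simpa using (hball _ (hseg s hs).2).2
    calc ‖f' (x + s • h) h - f' x h - s * B h h‖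
        = ‖(f' (x + s • h) - f' x - B (s • h)) h‖ := by
          simp only [map_smul, sub_apply, smul_apply, smul_eq_mul]
      _ ≤ c * ‖s • h‖ * ‖h‖ := ContinuousLinearMap.le_of_opNorm_le _ hexp h
      _ ≤ c * ‖h‖ * ‖h‖ := by gcongr; exact (hseg s hs).1
      _ = c * ‖h‖ ^ 2 := by ring
  have hmean := (convex_Icc (0 : ℝ) 1).norm_image_sub_le_of_norm_hasDerivWithin_le hderiv hbound
    (left_mem_Icc.2 zero_le_one) (right_mem_Icc.2 zero_le_one)
  simpa using hmean

end HasTaylorTwoAt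

end SecondOrderExpansion

section RadialExpansions

variable {E : Type*} [NormedAddCommGroup E] [InnerProductSpace ℝ E]

variable (E) in
/-- The inner product as a bilinear form; `innerSL ℝ` itself has the type of a sesquilinear one. -/
noncomputable def innerForm : E →L[ℝ] E →L[ℝ] ℝ :=
  innerSL ℝ

@[simp]
theorem innerForm_apply (ξ ζ : E) : innerForm E ξ ζ = ⟪ξ, ζ⟫ :=
  rfl

theorem hasFDerivAt_innerForm (x : E) : HasFDerivAt (innerSL ℝ : E → E →L[ℝ] ℝ) (innerForm E) x :=
  (innerForm E).hasFDerivAt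

theorem hasTaylorTwoAt_inner (Z x : E) : HasTaylorTwoAt (fun w => ⟪Z, w⟫) (innerSL ℝ Z) 0 x :=
  .of_hasFDerivAt (f' := fun _ => innerSL ℝ Z)
    (.of_forall fun _ => (innerSL ℝ Z).hasFDerivAt) (hasFDerivAt_const _ _)

theorem hasTaylorTwoAt_norm_sub_sq (c x : E) :
    HasTaylorTwoAt (fun w => ‖w - c‖ ^ 2) ((2 : ℝ) • innerSL ℝ (x - c)) ((2 : ℝ) • innerForm E) x :=
  .of_hasFDerivAt (f' := fun y => (2 : ℝ) • innerSL ℝ (y - c))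
    (.of_forall fun y =>
      ((hasFDerivAt_id y).sub_const c).norm_sq.congr_fderiv (by ext; simp))
    (((hasFDerivAt_innerForm (x - c)).comp x ((hasFDerivAt_id x).sub_const c)).const_smul (2 : ℝ))

theorem hasFDerivAt_norm_of_ne_zero {x : E} (hx : x ≠ 0) :
    HasFDerivAt (fun w : E => ‖w‖) (‖x‖⁻¹ • innerSL ℝ x) x := by
  have hsqrt := ((hasFDerivAt_id x).norm_sq).sqrt (by simpa using hx)
  simp only [id, Real.sqrt_sq (norm_nonneg _)] at hsqrt
  refine hsqrt.congr_fderiv ?_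
  ext ξ
  simp only [one_div, mul_inv_rev, ContinuousLinearMap.comp_id, smul_apply, coe_innerSL_apply,
    nsmul_eq_mul, Nat.cast_ofNat, smul_eq_mul]
  ring

theorem hasTaylorTwoAt_norm {x : E} (hx : x ≠ 0) :
    HasTaylorTwoAt (fun w => ‖w‖) (innerSL ℝ (NormedSpace.normalize x))
      (‖x‖⁻¹ • (innerForm E -
        (innerSL ℝ (NormedSpace.normalize x)).smulRight
          (innerSL ℝ (NormedSpace.normalize x)))) x := by
  simp only [NormedSpace.normalize]
  have hnx : ‖x‖ ≠ 0 := norm_ne_zero_iff.2 hx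
  rw [map_smul]
  refine .of_hasFDerivAt (f' := fun y => ‖y‖⁻¹ • innerSL ℝ y) ?_ ?_
  · filter_upwards [isOpen_ne.mem_nhds hx] with y hy using hasFDerivAt_norm_of_ne_zero hy
  · have hinv := (hasDerivAt_inv hnx).comp_hasFDerivAt x (hasFDerivAt_norm_of_ne_zero hx)
    refine (hinv.smul (hasFDerivAt_innerForm x)).congr_fderiv ?_
    ext ξ ζ
    simp only [Function.comp_apply, neg_smul, add_apply, smul_apply, neg_apply, sub_apply,
      ContinuousLinearMap.smulRight_apply, coe_innerSL_apply, smul_eq_mul, innerForm_apply]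
    field_simp
    ring

theorem hasTaylorTwoAt_exp_norm_sub_sq (k : ℝ) (c x : E) :
    HasTaylorTwoAt (fun w => Real.exp (-(k * ‖w - c‖ ^ 2)))
      (-(2 * k * Real.exp (-(k * ‖x - c‖ ^ 2))) • innerSL ℝ (x - c))
      (Real.exp (-(k * ‖x - c‖ ^ 2)) • ((4 * k ^ 2) •
        (innerSL ℝ (x - c)).smulRight (innerSL ℝ (x - c)) - (2 * k) • innerForm E)) x := by
  have hexp : ∀ y, HasFDerivAt (fun w : E => Real.exp (-(k * ‖w - c‖ ^ 2)))
      (-(2 * k * Real.exp (-(k * ‖y - c‖ ^ 2))) • innerSL ℝ (y - c)) y := fun y => by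
    refine ((hasTaylorTwoAt_norm_sub_sq c y).hasFDerivAt.const_mul k).neg.exp.congr_fderiv ?_
    ext ξ
    simp only [Pi.neg_apply, neg_apply, smul_apply, smul_eq_mul]
    ring
  refine .of_hasFDerivAt
    (f' := fun y => -(2 * k * Real.exp (-(k * ‖y - c‖ ^ 2))) • innerSL ℝ (y - c))
    (.of_forall hexp) ?_
  refine (((hexp x).const_mul (2 * k)).neg.smul
    ((hasFDerivAt_innerForm (x - c)).comp x ((hasFDerivAt_id x).sub_const c))).congr_fderiv ?_
  ext ξ ζ
  simp only [Pi.neg_apply, ContinuousLinearMap.comp_id, neg_smul, map_sub, smul_neg, neg_neg, id_eq,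
    Function.comp_apply, add_apply, neg_apply, smul_apply, sub_apply, coe_innerSL_apply,
    ContinuousLinearMap.smulRight_apply, smul_eq_mul, innerForm_apply]
  ring

end RadialExpansions

section Directions

open NormedSpace

variable {V : Type*} [NormedAddCommGroup V] [NormedSpace ℝ V]

theorem norm_normalize_le_one (x : V) : ‖normalize x‖ ≤ 1 := by
  rw [NormedSpace.normalize, norm_smul, norm_inv, norm_norm]
  exact inv_mul_le_one

theorem norm_normalize_sub_normalize_le (x : V) {y : V} (hy : y ≠ 0) :
    ‖normalize x - normalize y‖ ≤ 2 * (‖x - y‖ / ‖y‖) := by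
  have hpos : 0 < ‖y‖ := norm_pos_iff.2 hy
  have hxy : ‖y‖ • (normalize x - normalize y) = (x - y) + (‖y‖ - ‖x‖) • normalize x := by
    rw [smul_sub, sub_smul, norm_smul_normalize, norm_smul_normalize]
    abel
  rw [← mul_div_assoc, le_div_iff₀ hpos]
  calc ‖normalize x - normalize y‖ * ‖y‖
      = ‖(x - y) + (‖y‖ - ‖x‖) • normalize x‖ := by rw [← hxy, norm_smul, norm_norm, mul_comm]
    _ ≤ ‖x - y‖ + |‖y‖ - ‖x‖| * ‖normalize x‖ := by
        rw [← Real.norm_eq_abs, ← norm_smul]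
        exact norm_add_le _ _
    _ ≤ ‖x - y‖ + ‖x - y‖ * 1 := by
        gcongr
        · rw [norm_sub_rev x y]
          exact abs_norm_sub_norm_le y x
        · exact norm_normalize_le_one x
    _ = 2 * ‖x - y‖ := by ring

end Directions

section TraceAlong

variable {E : Type*} [NormedAddCommGroup E] [InnerProductSpace ℝ E]

variable [FiniteDimensional ℝ E]

theorem sum_apply_orthonormalBasis_eq {ι κ : Type*} [Fintype ι] [Fintype κ]
    (b : OrthonormalBasis ι ℝ E) (b' : OrthonormalBasis κ ℝ E) (B : E →L[ℝ] E →L[ℝ] ℝ) :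
    ∑ i, B (b i) (b i) = ∑ j, B (b' j) (b' j) := by
  have : CompleteSpace E := FiniteDimensional.complete ℝ E
  set S : E →ₗ[ℝ] E :=
    (InnerProductSpace.toDual ℝ E).symm.toLinearEquiv.toLinearMap ∘ₗ B.toLinearMap
  have hS : ∀ ξ, ⟪ξ, S ξ⟫ = B ξ ξ := fun ξ => by
    rw [real_inner_comm]
    exact InnerProductSpace.toDual_symm_apply
  simpa only [hS] using (S.trace_eq_sum_inner b).symm.trans (S.trace_eq_sum_inner b')

/-- The contraction `∑ i, B (T eᵢ) (T eᵢ) = tr (Tᵀ B T)` over an orthonormal basis, as a linear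
function of the form `B`. At `B = ⟪·, ·⟫` it is the square of the Hilbert–Schmidt norm of `T`. -/
noncomputable def traceAlong (T : E →L[ℝ] E) : (E →L[ℝ] E →L[ℝ] ℝ) →ₗ[ℝ] ℝ where
  toFun B := ∑ i, B (T (stdOrthonormalBasis ℝ E i)) (T (stdOrthonormalBasis ℝ E i))
  map_add' B C := by simp only [add_apply, Finset.sum_add_distrib]
  map_smul' c B := by
    simp only [smul_apply, smul_eq_mul, Finset.mul_sum, RingHom.id_apply]

theorem traceAlong_apply (T : E →L[ℝ] E) (B : E →L[ℝ] E →L[ℝ] ℝ) :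
    traceAlong T B = ∑ i, B (T (stdOrthonormalBasis ℝ E i)) (T (stdOrthonormalBasis ℝ E i)) :=
  rfl

theorem traceAlong_sub (T : E →L[ℝ] E) (B C : E →L[ℝ] E →L[ℝ] ℝ) :
    traceAlong T (B - C) = traceAlong T B - traceAlong T C :=
  map_sub (traceAlong T) B C

theorem traceAlong_comp_isometry (T : E →L[ℝ] E) (ρ : E ≃ₗᵢ[ℝ] E) (B : E →L[ℝ] E →L[ℝ] ℝ) :
    traceAlong (T ∘L ρ.toContinuousLinearEquiv) B = traceAlong T B :=
  sum_apply_orthonormalBasis_eq ((stdOrthonormalBasis ℝ E).map ρ) (stdOrthonormalBasis ℝ E)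
    (B.bilinearComp T T)

theorem traceAlong_nonneg (T : E →L[ℝ] E) {B : E →L[ℝ] E →L[ℝ] ℝ} (hB : ∀ ξ, 0 ≤ B ξ ξ) :
    0 ≤ traceAlong T B := by
  rw [traceAlong_apply]
  exact Finset.sum_nonneg fun i _ => hB (T (stdOrthonormalBasis ℝ E i))

theorem traceAlong_innerForm_le {T : E →L[ℝ] E} {c : ℝ} (hT : ∀ ξ, ‖T ξ‖ ^ 2 ≤ c * ‖ξ‖ ^ 2) :
    traceAlong T (innerForm E) ≤ Module.finrank ℝ E * c := by
  calc traceAlong T (innerForm E) ≤ ∑ _i : Fin (Module.finrank ℝ E), c := by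
        rw [traceAlong_apply]
        exact Finset.sum_le_sum fun i _ => by
          simpa only [innerForm_apply, real_inner_self_eq_norm_sq, OrthonormalBasis.norm_eq_one,
            one_pow, mul_one] using hT (stdOrthonormalBasis ℝ E i)
    _ = Module.finrank ℝ E * c := by simp

end TraceAlong

section Coefficients

open NormedSpace InnerProductSpace

variable {E : Type*} [NormedAddCommGroup E] [InnerProductSpace ℝ E]

/-- The square root `I + (√(p - 1) - 1) n ⊗ n` of the matrix `I + (p - 2) n ⊗ n`, where `n` is the
direction of `P`; it is the identity at `P = 0`. -/
noncomputable def coeffSqrt (p : ℝ) (P : E) : E →L[ℝ] E :=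
  1 + (√(p - 1) - 1) • rankOne ℝ (normalize P) (normalize P)

theorem coeffSqrt_apply (p : ℝ) (P ξ : E) :
    coeffSqrt p P ξ = ξ + ((√(p - 1) - 1) * ⟪normalize P, ξ⟫) • normalize P := by
  simp [coeffSqrt, smul_smul]

theorem coeffSqrt_smul_of_pos (p : ℝ) {c : ℝ} (hc : 0 < c) (P : E) :
    coeffSqrt p (c • P) = coeffSqrt p P := by
  rw [coeffSqrt, coeffSqrt, normalize_smul_of_pos hc]

theorem inner_coeffSqrt_left (p : ℝ) (P ξ ζ : E) :
    ⟪coeffSqrt p P ξ, ζ⟫ = ⟪ξ, coeffSqrt p P ζ⟫ := by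
  simp only [coeffSqrt_apply, inner_add_left, inner_add_right, real_inner_smul_left,
    real_inner_smul_right, real_inner_comm ξ (normalize P)]
  ring

theorem norm_coeffSqrt_sq {p : ℝ} (hp : 1 ≤ p) (P ξ : E) :
    ‖coeffSqrt p P ξ‖ ^ 2 = ‖ξ‖ ^ 2 + (p - 2) * ⟪normalize P, ξ⟫ ^ 2 := by
  have hsqrt : √(p - 1) ^ 2 = p - 1 := Real.sq_sqrt (by linarith)
  rcases eq_or_ne P 0 with rfl | hP
  · simp [coeffSqrt_apply]
  · rw [coeffSqrt_apply, norm_add_sq_real, norm_smul, norm_normalize_eq_one_iff.2 hP,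
      real_inner_smul_right, real_inner_comm (normalize P) ξ, Real.norm_eq_abs, mul_one, sq_abs]
    linear_combination ⟪normalize P, ξ⟫ ^ 2 * hsqrt

theorem inner_normalize_sq_le (P ξ : E) : ⟪normalize P, ξ⟫ ^ 2 ≤ ‖ξ‖ ^ 2 :=
  sq_le_sq.2 <| (abs_real_inner_le_norm _ _).trans <|
    (mul_le_of_le_one_left (norm_nonneg _) (norm_normalize_le_one P)).trans (le_abs_self _)

theorem norm_coeffSqrt_sq_le {p : ℝ} (hp : 1 ≤ p) (P ξ : E) :
    ‖coeffSqrt p P ξ‖ ^ 2 ≤ p * ‖ξ‖ ^ 2 := by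
  rw [norm_coeffSqrt_sq hp]
  nlinarith [inner_normalize_sq_le P ξ, sq_nonneg ⟪normalize P, ξ⟫]

theorem norm_sq_le_norm_coeffSqrt_sq {p : ℝ} (hp : 1 < p) (P ξ : E) :
    ‖ξ‖ ^ 2 ≤ (1 + (p - 1)⁻¹) * ‖coeffSqrt p P ξ‖ ^ 2 := by
  have hp' : 0 < p - 1 := by linarith
  rw [norm_coeffSqrt_sq hp.le, show 1 + (p - 1)⁻¹ = p / (p - 1) by field_simp; ring,
    div_mul_eq_mul_div, le_div_iff₀ hp']
  nlinarith [inner_normalize_sq_le P ξ, sq_nonneg ⟪normalize P, ξ⟫,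
    mul_nonneg hp'.le (sq_nonneg ⟪normalize P, ξ⟫)]

theorem norm_coeffSqrt_sub_le (p : ℝ) (P : E) {Q : E} (hQ : Q ≠ 0) (ξ : E) :
    ‖(coeffSqrt p P - coeffSqrt p Q) ξ‖ ≤ |√(p - 1) - 1| * (4 * (‖P - Q‖ / ‖Q‖)) * ‖ξ‖ := by
  set θ := √(p - 1) - 1
  set m := normalize P
  set n := normalize Q
  have hsplit : (coeffSqrt p P - coeffSqrt p Q) ξ = θ • (⟪m - n, ξ⟫ • m + ⟪n, ξ⟫ • (m - n)) := by
    rw [sub_apply, coeffSqrt_apply, coeffSqrt_apply, inner_sub_left]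
    module
  calc ‖(coeffSqrt p P - coeffSqrt p Q) ξ‖
      = |θ| * ‖⟪m - n, ξ⟫ • m + ⟪n, ξ⟫ • (m - n)‖ := by
        rw [hsplit, norm_smul, Real.norm_eq_abs]
    _ ≤ |θ| * (‖m - n‖ * ‖ξ‖ * ‖m‖ + ‖n‖ * ‖ξ‖ * ‖m - n‖) := by
        gcongr
        refine (norm_add_le _ _).trans (add_le_add ?_ ?_) <;> rw [norm_smul] <;> gcongr <;>
          exact norm_inner_le_norm _ _
    _ ≤ |θ| * (2 * (‖P - Q‖ / ‖Q‖) * ‖ξ‖ * 1 + 1 * ‖ξ‖ * (2 * (‖P - Q‖ / ‖Q‖))) := by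
        have hmn := norm_normalize_sub_normalize_le P hQ
        have hm := norm_normalize_le_one P
        have hn := norm_normalize_le_one Q
        gcongr
    _ = |θ| * (4 * (‖P - Q‖ / ‖Q‖)) * ‖ξ‖ := by ring

theorem reflection_orthogonal_singleton_apply {ν : E} (hν : ‖ν‖ = 1) (ξ : E) :
    (ℝ ∙ ν)ᗮ.reflection ξ = ξ - (2 * ⟪ν, ξ⟫) • ν := by
  rw [Submodule.reflection_orthogonal_apply, Submodule.reflection_singleton_apply, hν]
  module

variable [FiniteDimensional ℝ E]

theorem traceAlong_coeffSqrt {p : ℝ} (hp : 1 ≤ p) {P : E} (hP : P ≠ 0)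
    (B : E →L[ℝ] E →L[ℝ] ℝ) :
    traceAlong (coeffSqrt p P) B =
      traceAlong 1 B + (p - 2) * B (normalize P) (normalize P) := by
  set e := stdOrthonormalBasis ℝ E
  set n := normalize P
  set θ := √(p - 1) - 1
  have hθ : 2 * θ + θ ^ 2 = p - 2 := by
    linear_combination Real.sq_sqrt (show 0 ≤ p - 1 by linarith)
  have hn : ∑ i, ⟪n, e i⟫ • e i = n := by
    simpa only [real_inner_comm] using e.sum_repr' n
  have hsq : ∑ i, ⟪n, e i⟫ ^ 2 = 1 := by
    rw [← one_pow 2, ← norm_normalize_eq_one_iff.2 hP, ← e.sum_sq_inner_left]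
  have hleft : ∑ i, ⟪n, e i⟫ * B (e i) n = B n n := by
    simpa using congrArg (fun ζ => B ζ n) hn
  have hright : ∑ i, ⟪n, e i⟫ * B n (e i) = B n n := by
    simpa using congrArg (fun ζ => B n ζ) hn
  have hterm : ∀ i, B (coeffSqrt p P (e i)) (coeffSqrt p P (e i)) = B (e i) (e i) +
      θ * (⟪n, e i⟫ * B (e i) n) + θ * (⟪n, e i⟫ * B n (e i)) +
      θ ^ 2 * B n n * ⟪n, e i⟫ ^ 2 := fun i => by
    simp only [coeffSqrt_apply, map_add, map_smul, add_apply, smul_apply, smul_eq_mul]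
    ring
  rw [traceAlong_apply, Finset.sum_congr rfl fun i _ => hterm i, traceAlong_apply]
  simp only [Finset.sum_add_distrib, ← Finset.mul_sum, hleft, hright, hsq,
    one_apply_eq_self]
  linear_combination B n n * hθ

theorem traceAlong_coeffSqrt_smulRight_innerSL (p : ℝ) (P a : E) :
    traceAlong (coeffSqrt p P) ((innerSL ℝ a).smulRight (innerSL ℝ a)) =
      ‖coeffSqrt p P a‖ ^ 2 := by
  rw [traceAlong_apply, ← (stdOrthonormalBasis ℝ E).sum_sq_inner_left]
  refine Finset.sum_congr rfl fun i _ => ?_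
  rw [inner_coeffSqrt_left]
  simp [sq]

variable (E) in
/-- The constant `A` controls the ellipticity and the Lipschitz behaviour of `coeffSqrt p`. -/
structure IsEllipticityConstant (p A : ℝ) : Prop where
  one_le : 1 ≤ A
  trace_le : ∀ P : E, traceAlong (coeffSqrt p P) (innerForm E) ≤ A
  norm_sq_le : ∀ P ξ : E, ‖ξ‖ ^ 2 ≤ A * ‖coeffSqrt p P ξ‖ ^ 2
  trace_sub_le : ∀ P Q : E, Q ≠ 0 →
    traceAlong (coeffSqrt p P - coeffSqrt p Q) (innerForm E) ≤ A * (‖P - Q‖ / ‖Q‖) ^ 2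

variable (E) in
theorem exists_isEllipticityConstant {p : ℝ} (hp : 1 < p) :
    ∃ A, IsEllipticityConstant E p A := by
  set n : ℝ := (Module.finrank ℝ E : ℝ)
  set θ := √(p - 1) - 1
  have hn : 0 ≤ n * p := by positivity
  have hθ : 0 ≤ n * (16 * θ ^ 2) := by positivity
  have hp' : 0 < (p - 1)⁻¹ := inv_pos.2 (by linarith)
  refine ⟨(1 + (p - 1)⁻¹) + n * p + n * (16 * θ ^ 2), by linarith, fun P => ?_, fun P ξ => ?_,
    fun P Q hQ => ?_⟩
  · exact (traceAlong_innerForm_le (norm_coeffSqrt_sq_le hp.le P)).trans (by linarith)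
  · refine (norm_sq_le_norm_coeffSqrt_sq hp P ξ).trans ?_
    exact mul_le_mul_of_nonneg_right (by linarith) (sq_nonneg _)
  · set r := ‖P - Q‖ / ‖Q‖
    calc traceAlong (coeffSqrt p P - coeffSqrt p Q) (innerForm E)
        ≤ n * (16 * θ ^ 2 * r ^ 2) := traceAlong_innerForm_le fun ξ => by
          refine (pow_le_pow_left₀ (norm_nonneg _) (norm_coeffSqrt_sub_le p P hQ ξ) 2).trans_eq ?_
          rw [mul_pow, mul_pow, sq_abs]
          ring
      _ = n * (16 * θ ^ 2) * r ^ 2 := by ring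
      _ ≤ _ := by
          gcongr
          linarith

/-- Every direction `e` is reached by `coeffSqrt p Q`, so that the noise of the second variable can
be reflected along `e`. -/
theorem IsEllipticityConstant.exists_reflection {p A : ℝ} (hA : IsEllipticityConstant E p A)
    (Q : E) {e : E} (he : ‖e‖ = 1) :
    ∃ (ρ : E ≃ₗᵢ[ℝ] E) (ν : E) (τ : ℝ), ‖ν‖ = 1 ∧ 1 ≤ A * τ ^ 2 ∧
      coeffSqrt p Q ∘L ρ.toContinuousLinearEquiv = coeffSqrt p Q - (2 * τ) • rankOne ℝ e ν := by
  have hinj : Function.Injective (coeffSqrt p Q) := by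
    refine (injective_iff_map_eq_zero _).2 fun ξ hξ => ?_
    have := hA.norm_sq_le Q ξ
    rw [hξ, norm_zero] at this
    exact norm_eq_zero.1 (pow_eq_zero_iff two_ne_zero |>.1 (le_antisymm (by linarith)
      (sq_nonneg _)))
  obtain ⟨w, hw⟩ := LinearMap.surjective_of_injective (f := (coeffSqrt p Q).toLinearMap) hinj e
  have hw' : coeffSqrt p Q w = e := hw
  have hw0 : w ≠ 0 := by
    rintro rfl
    rw [← hw', map_zero, norm_zero] at he
    exact zero_ne_one he
  have hν : ‖normalize w‖ = 1 := norm_normalize_eq_one_iff.2 hw0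
  refine ⟨(ℝ ∙ normalize w)ᗮ.reflection, normalize w, ‖w‖⁻¹, hν, ?_, ?_⟩
  · have := hA.norm_sq_le Q w
    rw [hw', he, one_pow, mul_one] at this
    rwa [inv_pow, ← div_eq_mul_inv, one_le_div (by positivity)]
  · have hτ : coeffSqrt p Q (normalize w) = ‖w‖⁻¹ • e := by
      rw [NormedSpace.normalize, map_smul, hw']
    ext ξ
    simp only [ContinuousLinearMap.comp_apply, ContinuousLinearEquiv.coe_coe,
      LinearIsometryEquiv.coe_toContinuousLinearEquiv, reflection_orthogonal_singleton_apply hν,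
      map_sub, map_smul, hτ, sub_apply, smul_apply, rankOne_apply]
    module

end Coefficients

section Doubling

variable {E : Type*} [NormedAddCommGroup E]

/-- The function of the pair `(x, y)` maximized in the doubling of variables: `U x - U y` penalized
by `F (x - y)` and localized by `G x`. -/
def doubled (U F G : E → ℝ) (z : E × E) : ℝ :=
  U z.1 - U z.2 - F (z.1 - z.2) - G z.1

theorem continuousOn_doubled {U F G : E → ℝ} {S : Set E} {T : Set (E × E)} (hU : ContinuousOn U S)
    (hF : Continuous F) (hG : Continuous G) (hT : ∀ z ∈ T, z.1 ∈ S ∧ z.2 ∈ S) :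
    ContinuousOn (doubled U F G) T := by
  have hfst : ContinuousOn (fun z : E × E => U z.1) T :=
    hU.comp continuousOn_fst fun z hz => (hT z hz).1
  have hsnd : ContinuousOn (fun z : E × E => U z.2) T :=
    hU.comp continuousOn_snd fun z hz => (hT z hz).2
  have hFG : Continuous fun z : E × E => F (z.1 - z.2) := by fun_prop
  have hG' : Continuous fun z : E × E => G z.1 := by fun_prop
  exact ((hfst.sub hsnd).sub hFG.continuousOn).sub hG'.continuousOn

theorem le_of_isLocalMax_imp_le {X : Type*} [TopologicalSpace X] {T : Set X} {Φ : X → ℝ} {b : ℝ}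
    (hT : IsCompact T) (hΦ : ContinuousOn Φ T) (hint : ∀ z ∈ T, b < Φ z → T ∈ 𝓝 z)
    (hmax : ∀ z ∈ T, b < Φ z → ¬IsLocalMax Φ z) : ∀ z ∈ T, Φ z ≤ b := by
  intro w hw
  obtain ⟨z, hz, hzmax⟩ := hT.exists_isMaxOn ⟨w, hw⟩ hΦ
  by_contra! hlt
  have hbz : b < Φ z := hlt.trans_le (hzmax hw)
  exact hmax z hz hbz (hzmax.isLocalMax (hint z hz hbz))

/-- The pairs of points of `E × E` with first point within `R` of `x₀` and difference within `h`
of `c`. -/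
def pairTube (x₀ c : E) (R h : ℝ) : Set (E × E) :=
  {z | ‖z.1 - x₀‖ ≤ R ∧ ‖z.1 - z.2 - c‖ ≤ h}

theorem isCompact_pairTube [ProperSpace E] (x₀ c : E) (R h : ℝ) :
    IsCompact (pairTube x₀ c R h) := by
  have himage : pairTube x₀ c R h =
      (fun z : E × E => (z.1, z.1 - z.2)) '' (closedBall x₀ R ×ˢ closedBall c h) := by
    ext z
    simp only [pairTube, mem_ofPred_eq, mem_image, mem_prod, mem_closedBall, dist_eq_norm]
    constructor
    · exact fun hz => ⟨(z.1, z.1 - z.2), hz, by simp⟩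
    · rintro ⟨w, hw, rfl⟩
      simpa using hw
  rw [himage]
  exact ((isCompact_closedBall x₀ R).prod (isCompact_closedBall c h)).image (by fun_prop)

theorem pairTube_mem_nhds {x₀ c : E} {R h : ℝ} {z : E × E} (hR : ‖z.1 - x₀‖ < R)
    (hh : ‖z.1 - z.2 - c‖ < h) : pairTube x₀ c R h ∈ 𝓝 z := by
  have hfst : ∀ᶠ w : E × E in 𝓝 z, ‖w.1 - x₀‖ < R :=
    ContinuousAt.eventually_lt (by fun_prop) continuousAt_const hR
  have hdiff : ∀ᶠ w : E × E in 𝓝 z, ‖w.1 - w.2 - c‖ < h :=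
    ContinuousAt.eventually_lt (by fun_prop) continuousAt_const hh
  filter_upwards [hfst, hdiff] with w hwR hwh using ⟨hwR.le, hwh.le⟩

theorem mem_closedBall_of_mem_pairTube {x₀ c : E} {R h : ℝ} {z : E × E}
    (hz : z ∈ pairTube x₀ c R h) :
    z.1 ∈ closedBall x₀ (R + h + ‖c‖) ∧ z.2 ∈ closedBall x₀ (R + h + ‖c‖) := by
  obtain ⟨hR, hh⟩ := hz
  have hh0 : 0 ≤ h := (norm_nonneg _).trans hh
  simp only [mem_closedBall, dist_eq_norm]
  refine ⟨by linarith [norm_nonneg c], ?_⟩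
  calc ‖z.2 - x₀‖ = ‖(z.1 - x₀) - (z.1 - z.2 - c) - c‖ := by congr 1; abel
    _ ≤ ‖z.1 - x₀‖ + ‖z.1 - z.2 - c‖ + ‖c‖ := by
        refine (norm_sub_le _ _).trans ?_
        gcongr
        exact norm_sub_le _ _
    _ ≤ R + h + ‖c‖ := by gcongr

end Doubling

section Equation

variable {E : Type*} [NormedAddCommGroup E] [InnerProductSpace ℝ E]

theorem hasFDerivAt_comp_affine {U : E → ℝ} {x₀ y P : E} {r : ℝ} (c : ℝ)
    (hP : HasFDerivAt U (innerSL ℝ P) (x₀ + r • y)) :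
    HasFDerivAt (fun z => c * U (x₀ + r • z)) (innerSL ℝ ((c * r) • P)) y := by
  have haff : HasFDerivAt (fun z : E => x₀ + r • z) (r • ContinuousLinearMap.id ℝ E) y :=
    ((hasFDerivAt_id y).const_smul r).const_add x₀
  refine ((hP.comp y haff).const_mul c).congr_fderiv ?_
  ext ξ
  simp [mul_assoc]

theorem eq_of_isLocalMax_doubled {U F G : E → ℝ} {x y P P' Q K : E}
    (hx : HasFDerivAt U (innerSL ℝ P) x) (hy : HasFDerivAt U (innerSL ℝ P') y)
    (hF : HasFDerivAt F (innerSL ℝ Q) (x - y)) (hG : HasFDerivAt G (innerSL ℝ K) x)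
    (hmax : IsLocalMax (doubled U F G) (x, y)) :
    P = Q + K ∧ P' = Q := by
  have hfst := hasFDerivAt_fst (𝕜 := ℝ) (p := (x, y))
  have hsnd := hasFDerivAt_snd (𝕜 := ℝ) (p := (x, y))
  have hzero := hmax.hasFDerivAt_eq_zero
    ((((hx.comp (x, y) hfst).sub (hy.comp (x, y) hsnd)).sub
      (hF.comp (x, y) (hfst.sub hsnd))).sub (hG.comp (x, y) hfst))
  have hval : ∀ ξ ζ : E, ⟪P, ξ⟫ - ⟪P', ζ⟫ - (⟪Q, ξ⟫ - ⟪Q, ζ⟫) - ⟪K, ξ⟫ = 0 := fun ξ ζ => by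
    simpa using DFunLike.congr_fun hzero (ξ, ζ)
  constructor <;> refine ext_inner_right ℝ fun ξ => ?_
  · have := hval ξ 0
    rw [inner_zero_right, inner_zero_right] at this
    rw [inner_add_left]
    linarith
  · have := hval 0 ξ
    rw [inner_zero_right, inner_zero_right, inner_zero_right] at this
    linarith

variable [FiniteDimensional ℝ E]

/-- `U` solves `tr (A(∇U) D²U) = g (∇U)` on `S` away from the critical points, where
`A(P) = I + (p - 2) P ⊗ P / |P|²` is the square of `coeffSqrt p P`. -/
def IsNondivSolution (p : ℝ) (g U : E → ℝ) (S : Set E) : Prop :=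
  ∀ x ∈ S, ∃ P : E, HasFDerivAt U (innerSL ℝ P) x ∧ (P ≠ 0 → ∃ H : E →L[ℝ] E →L[ℝ] ℝ,
    HasTaylorTwoAt U (innerSL ℝ P) H x ∧ traceAlong (coeffSqrt p P) H = g P)

namespace IsNondivSolution

variable {p : ℝ} {g U : E → ℝ} {S T : Set E}

theorem continuousOn (h : IsNondivSolution p g U S) : ContinuousOn U S := fun x hx =>
  (h x hx).choose_spec.1.continuousAt.continuousWithinAt

theorem mono (h : IsNondivSolution p g U S) (hTS : T ⊆ S) : IsNondivSolution p g U T :=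
  fun x hx => h x (hTS hx)

theorem rescale (hU : IsNondivSolution p g U S) (x₀ : E) {c r : ℝ} (hc : 0 < c) (hr : 0 < r)
    (hT : ∀ y ∈ T, x₀ + r • y ∈ S) :
    IsNondivSolution p (fun P => c * r ^ 2 * g ((c * r)⁻¹ • P))
      (fun y => c * U (x₀ + r • y)) T := by
  intro y hy
  obtain ⟨P, hP, hH⟩ := hU _ (hT y hy)
  have hcr : 0 < c * r := mul_pos hc hr
  refine ⟨(c * r) • P, hasFDerivAt_comp_affine c hP, fun hP0 => ?_⟩
  obtain ⟨H, hUH, hH⟩ := hH fun h => hP0 (by rw [h, smul_zero])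
  refine ⟨(c * r ^ 2) • H, ?_, ?_⟩
  · convert (hUH.comp_affine x₀ (r • ContinuousLinearMap.id ℝ E)).const_mul c using 1
    · rfl
    · ext ξ
      simp [mul_assoc]
    · refine ContinuousLinearMap.ext fun ξ => ContinuousLinearMap.ext fun ζ => ?_
      simp only [smul_apply, smul_eq_mul, ContinuousLinearMap.bilinearComp_apply, map_smul,
        ContinuousLinearMap.id_apply]
      ring
  · dsimp only
    rw [smul_smul, inv_mul_cancel₀ hcr.ne', one_smul, ← hH, coeffSqrt_smul_of_pos p hcr,
      map_smul, smul_eq_mul]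

/-- The Hessians of `U` at the two points are tested along `ξ` and `ζ` simultaneously; the isometry
`ρ` is the coupling between the two copies of the space. -/
theorem doubling (hU : IsNondivSolution p g U S) {F G : E → ℝ} {x y Q K : E}
    {BF BG : E →L[ℝ] E →L[ℝ] ℝ} (hx : x ∈ S) (hy : y ∈ S)
    (hmax : IsLocalMax (doubled U F G) (x, y))
    (hF : HasTaylorTwoAt F (innerSL ℝ Q) BF (x - y)) (hG : HasTaylorTwoAt G (innerSL ℝ K) BG x)
    (hQ : Q ≠ 0) (hQK : Q + K ≠ 0) (ρ : E ≃ₗᵢ[ℝ] E) :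
    g (Q + K) - g Q ≤
      traceAlong (coeffSqrt p (Q + K) - coeffSqrt p Q ∘L ρ.toContinuousLinearEquiv) BF +
        traceAlong (coeffSqrt p (Q + K)) BG := by
  obtain ⟨P, hP, hHx⟩ := hU x hx
  obtain ⟨P', hP', hHy⟩ := hU y hy
  obtain ⟨rfl, rfl⟩ := eq_of_isLocalMax_doubled hP hP' hF.hasFDerivAt hG.hasFDerivAt hmax
  obtain ⟨Hx, hUx, hgx⟩ := hHx hQK
  obtain ⟨Hy, hUy, hgy⟩ := hHy hQ
  set fst := ContinuousLinearMap.fst ℝ E E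
  set snd := ContinuousLinearMap.snd ℝ E E
  have hHess : ∀ ξ ζ : E, Hx ξ ξ ≤ Hy ζ ζ + BF (ξ - ζ) (ξ - ζ) + BG ξ ξ := fun ξ ζ => by
    have hjet := ((hUx.comp_clm (w := (x, y)) fst).sub (hUy.comp_clm (w := (x, y)) snd)).sub
      (hF.comp_clm (w := (x, y)) (fst - snd)) |>.sub (hG.comp_clm (w := (x, y)) fst)
    have := hjet.nonpos_of_isLocalMax hmax (ξ, ζ)
    simp only [sub_apply, ContinuousLinearMap.bilinearComp_apply, fst, snd,
      ContinuousLinearMap.coe_fst', ContinuousLinearMap.coe_snd'] at this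
    linarith
  rw [sub_le_iff_le_add', ← hgx, ← hgy, ← traceAlong_comp_isometry (coeffSqrt p P') ρ, ← add_assoc]
  simp only [traceAlong_apply, ← Finset.sum_add_distrib]
  exact Finset.sum_le_sum fun i _ => hHess _ _

end IsNondivSolution

end Equation

section Penalty

open NormedSpace

variable {E : Type*} [NormedAddCommGroup E] [InnerProductSpace ℝ E]

/-- The function of `w = x - y` subtracted from `U x - U y` in the doubling of variables: a slope
`Z`, a Lipschitz defect `L` and a quadratic correction centred at `v`. -/
noncomputable def penalty (Z v : E) (L c : ℝ) (w : E) : ℝ :=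
  ⟪Z, w⟫ + L * ‖w‖ + c * ‖w - v‖ ^ 2

theorem continuous_penalty (Z v : E) (L c : ℝ) : Continuous (penalty Z v L c) := by
  unfold penalty
  fun_prop

theorem hasTaylorTwoAt_penalty (Z v : E) (L c : ℝ) {w : E} (hw : w ≠ 0) :
    HasTaylorTwoAt (penalty Z v L c)
      (innerSL ℝ (Z + L • normalize w + (2 * c) • (w - v)))
      ((L / ‖w‖) • (innerForm E - (innerSL ℝ (normalize w)).smulRight (innerSL ℝ (normalize w))) +
        (2 * c) • innerForm E) w := by
  convert ((hasTaylorTwoAt_inner Z w).add ((hasTaylorTwoAt_norm hw).const_mul L)).add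
    ((hasTaylorTwoAt_norm_sub_sq v w).const_mul c) using 1
  · rfl
  · rw [map_add, map_add, map_smul, map_smul, smul_smul, mul_comm]
  · refine ContinuousLinearMap.ext fun ξ => ContinuousLinearMap.ext fun ζ => ?_
    simp only [add_apply, smul_apply, zero_apply, smul_eq_mul]
    ring

end Penalty

section ReflectionTrace

open InnerProductSpace

variable {E : Type*} [NormedAddCommGroup E] [InnerProductSpace ℝ E]

theorem mul_sub_sq_inner_add_smul_le {e : E} (he : ‖e‖ = 1) (d : E) (c : ℝ) {a m : ℝ}
    (hm : 0 ≤ m) (hma : m ≤ a) :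
    a * (‖d + c • e‖ ^ 2 - ⟪e, d + c • e⟫ ^ 2) - m * ‖d + c • e‖ ^ 2 ≤
      a * ‖d‖ ^ 2 - m / 2 * c ^ 2 := by
  have hnorm : ‖d + c • e‖ ^ 2 = ‖d‖ ^ 2 + 2 * c * ⟪e, d⟫ + c ^ 2 := by
    rw [norm_add_sq_real, real_inner_smul_right, norm_smul, mul_pow, he, Real.norm_eq_abs, sq_abs,
      real_inner_comm]
    ring
  have hinner : ⟪e, d + c • e⟫ = ⟪e, d⟫ + c := by
    rw [inner_add_right, real_inner_smul_right, real_inner_self_eq_norm_sq, he]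
    ring
  have hle : ⟪e, d⟫ ^ 2 ≤ ‖d‖ ^ 2 := by
    have := abs_real_inner_le_norm e d
    rw [he, one_mul] at this
    exact sq_le_sq.2 (by rwa [abs_norm])
  rw [hnorm, hinner]
  nlinarith [mul_nonneg (sub_nonneg.2 hma) (sq_nonneg ⟪e, d⟫),
    mul_nonneg hm (sq_nonneg (2 * ⟪e, d⟫ + c)), mul_nonneg hm (sub_nonneg.2 hle)]

variable [FiniteDimensional ℝ E]

theorem traceAlong_add_smul_rankOne_le {e ν : E} (he : ‖e‖ = 1) (hν : ‖ν‖ = 1) (D : E →L[ℝ] E)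
    (c : ℝ) {a m : ℝ} (hm : 0 ≤ m) (hma : m ≤ a) :
    traceAlong (D + c • rankOne ℝ e ν)
        (a • (innerForm E - (innerSL ℝ e).smulRight (innerSL ℝ e)) - m • innerForm E) ≤
      a * traceAlong D (innerForm E) - m / 2 * c ^ 2 := by
  set b := stdOrthonormalBasis ℝ E
  have hsum : a * traceAlong D (innerForm E) - m / 2 * c ^ 2 =
      ∑ i, (a * ‖D (b i)‖ ^ 2 - m / 2 * (c * ⟪ν, b i⟫) ^ 2) := by
    simp only [traceAlong_apply, innerForm_apply, real_inner_self_eq_norm_sq, mul_pow,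
      Finset.sum_sub_distrib, ← Finset.mul_sum, b.sum_sq_inner_left, hν, one_pow, mul_one, b]
  rw [hsum, traceAlong_apply]
  refine Finset.sum_le_sum fun i _ => ?_
  refine le_of_eq_of_le ?_
    (mul_sub_sq_inner_add_smul_le he (D (b i)) (c * ⟪ν, b i⟫) hm hma)
  simp only [add_apply, sub_apply, smul_apply, rankOne_apply, innerForm_apply, smul_eq_mul,
    real_inner_self_eq_norm_sq, ContinuousLinearMap.smulRight_apply, innerSL_apply_apply,
    smul_smul, b]
  ring

end ReflectionTrace

section LipschitzEstimate

open NormedSpace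

variable {E : Type*} [NormedAddCommGroup E] [InnerProductSpace ℝ E]

theorem hasTaylorTwoAt_const_mul_norm_sub_sq (κ : ℝ) (c x : E) :
    HasTaylorTwoAt (fun w => κ * ‖w - c‖ ^ 2) (innerSL ℝ ((2 * κ) • (x - c)))
      ((2 * κ) • innerForm E) x := by
  convert (hasTaylorTwoAt_norm_sub_sq c x).const_mul κ using 1
  · rw [map_smul, smul_smul, mul_comm κ]
  · rw [smul_smul, mul_comm κ]

variable [FiniteDimensional ℝ E]

namespace IsNondivSolution

variable {p A : ℝ} {g U : E → ℝ} {S : Set E}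

/-- Reflecting the noise of the second variable along `x - y` exploits the concavity `-m` of the
penalty in that direction. -/
theorem doubling_reflection (hU : IsNondivSolution p g U S) (hA : IsEllipticityConstant E p A)
    {G : E → ℝ} {x y Z Q K : E} {L m : ℝ} {BG : E →L[ℝ] E →L[ℝ] ℝ} (hx : x ∈ S) (hy : y ∈ S)
    (hxy : x ≠ y) (hm : 0 ≤ m) (hmL : m * ‖x - y‖ ≤ L)
    (hmax : IsLocalMax (doubled U (penalty Z 0 L (-(m / 2))) G) (x, y))
    (hG : HasTaylorTwoAt G (innerSL ℝ K) BG x)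
    (hQ : Q = Z + (L - m * ‖x - y‖) • normalize (x - y)) (hQ0 : Q ≠ 0) (hQK : Q + K ≠ 0) :
    g (Q + K) - g Q + 2 * m / A ≤
      L / ‖x - y‖ * (A * (‖K‖ / ‖Q‖) ^ 2) + traceAlong (coeffSqrt p (Q + K)) BG := by
  have hw : x - y ≠ 0 := sub_ne_zero.2 hxy
  have ht : 0 < ‖x - y‖ := norm_pos_iff.2 hw
  have hL : 0 ≤ L := (mul_nonneg hm ht.le).trans hmL
  have he : ‖normalize (x - y)‖ = 1 := norm_normalize_eq_one_iff.2 hw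
  have hF := hasTaylorTwoAt_penalty Z 0 L (-(m / 2)) hw
  have hQF : Z + L • normalize (x - y) + (2 * -(m / 2)) • (x - y - 0) = Q := by
    rw [hQ, sub_zero, sub_smul, mul_smul m, norm_smul_normalize]
    module
  rw [hQF, show 2 * -(m / 2) = -m by ring, neg_smul m (innerForm E),
    ← sub_eq_add_neg] at hF
  obtain ⟨ρ, ν, τ, hν, hτ, hρ⟩ := hA.exists_reflection Q he
  have hA0 : 0 < A := one_pos.trans_le hA.one_le
  have hkey := hU.doubling hx hy hmax hF hG hQ0 hQK ρ
  rw [hρ, sub_sub_eq_add_sub, add_sub_right_comm] at hkey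
  have htrace := traceAlong_add_smul_rankOne_le he hν (coeffSqrt p (Q + K) - coeffSqrt p Q)
    (2 * τ) hm ((le_div_iff₀ ht).2 hmL)
  have hdiff := hA.trace_sub_le (Q + K) Q hQ0
  rw [add_sub_cancel_left] at hdiff
  have hdiff' := mul_le_mul_of_nonneg_left hdiff (div_nonneg hL ht.le)
  have hτm : 2 * m / A ≤ m / 2 * (2 * τ) ^ 2 := by
    rw [div_le_iff₀ hA0]
    nlinarith
  linarith

theorem two_mul_le_of_isLocalMax_doubled (hU : IsNondivSolution p g U S)
    (hA : IsEllipticityConstant E p A) {x₀ x y Z : E} {R L m κ ρ M Λ : ℝ} (hx : x ∈ S) (hy : y ∈ S)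
    (hxy : x ≠ y) (hR : ‖x - x₀‖ ≤ R) (hL : 0 < L) (hm : 0 ≤ m) (hκ : 0 ≤ κ) (hρ : 0 < ρ)
    (hΛ : 0 ≤ Λ) (hmL : m * ‖x - y‖ ≤ L / 2) (hM : κ * ‖x - x₀‖ ^ 2 ≤ M * ‖x - y‖)
    (hmax : IsLocalMax (doubled U (penalty Z 0 L (-(m / 2))) fun z => κ * ‖z - x₀‖ ^ 2) (x, y))
    (hZ : ∀ w, L / 2 ≤ ‖w‖ → ‖w‖ ≤ L → ρ ≤ ‖Z + w‖) (hκR : 2 * κ * R < ρ)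
    (hg : ∀ w K, L / 2 ≤ ‖w‖ → ‖w‖ ≤ L → ‖K‖ ≤ 2 * κ * R → g (Z + w) - g (Z + w + K) ≤ Λ * ‖K‖) :
    2 * m ≤ A * (2 * κ * R * Λ + 2 * κ * A + 4 * A * L * κ * M / ρ ^ 2) := by
  have hA0 : 0 < A := one_pos.trans_le hA.one_le
  have ht : 0 < ‖x - y‖ := norm_pos_iff.2 (sub_ne_zero.2 hxy)
  set w : E := (L - m * ‖x - y‖) • normalize (x - y) with hw
  set K : E := (2 * κ) • (x - x₀) with hK
  have hwnorm : ‖w‖ = L - m * ‖x - y‖ := by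
    rw [hw, norm_smul, norm_normalize_eq_one_iff.2 (sub_ne_zero.2 hxy), mul_one,
      Real.norm_of_nonneg (by linarith)]
  have hwL : L / 2 ≤ ‖w‖ := by linarith
  have hwL' : ‖w‖ ≤ L := by linarith [mul_nonneg hm ht.le]
  have hQ : ρ ≤ ‖Z + w‖ := hZ w hwL hwL'
  have hKnorm : ‖K‖ = 2 * κ * ‖x - x₀‖ := by
    rw [hK, norm_smul, Real.norm_of_nonneg (by positivity)]
  have hKR : ‖K‖ ≤ 2 * κ * R := by
    rw [hKnorm]
    gcongr
  have hQK : Z + w + K ≠ 0 := fun h => by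
    have : ‖Z + w‖ = ‖K‖ := by rw [eq_neg_of_add_eq_zero_left h, norm_neg]
    linarith
  have hkey := hU.doubling_reflection hA hx hy hxy hm (by linarith) hmax
    (hasTaylorTwoAt_const_mul_norm_sub_sq κ x₀ x) rfl
    (norm_pos_iff.1 (hρ.trans_le hQ)) hQK
  have hdrift : -(Λ * (2 * κ * R)) ≤ g (Z + w + K) - g (Z + w) := by
    linarith [hg w K hwL hwL' hKR, mul_le_mul_of_nonneg_left hKR hΛ]
  have hcurv : L / ‖x - y‖ * (A * (‖K‖ / ‖Z + w‖) ^ 2) ≤ 4 * A * L * κ * M / ρ ^ 2 := by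
    calc L / ‖x - y‖ * (A * (‖K‖ / ‖Z + w‖) ^ 2)
        ≤ L / ‖x - y‖ * (A * (‖K‖ / ρ) ^ 2) := by gcongr
      _ = 4 * A * L * κ / ρ ^ 2 * (κ * ‖x - x₀‖ ^ 2 / ‖x - y‖) := by
          rw [hKnorm]
          ring
      _ ≤ 4 * A * L * κ / ρ ^ 2 * M := by
          gcongr
          rwa [div_le_iff₀ ht]
      _ = 4 * A * L * κ * M / ρ ^ 2 := by ring
  have hloc : traceAlong (coeffSqrt p (Z + w + K)) ((2 * κ) • innerForm E) ≤ 2 * κ * A := by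
    rw [map_smul, smul_eq_mul]
    exact mul_le_mul_of_nonneg_left (hA.trace_le _) (by positivity)
  rw [← div_le_iff₀' hA0]
  linarith

theorem doubling_lipschitz (hA : IsEllipticityConstant E p A) {x₀ Z : E}
    {R h L m κ ρ M Λ : ℝ} (hU : IsNondivSolution p g U (closedBall x₀ (R + h)))
    (hR : 0 ≤ R) (hL : 0 < L) (hm : 0 ≤ m) (hκ : 0 ≤ κ) (hρ : 0 < ρ) (hΛ : 0 ≤ Λ)
    (hmh : m * h ≤ L / 2)
    (hlip : ∀ x y, ‖x - x₀‖ ≤ R → ‖x - y‖ ≤ h → U x - U y - ⟪Z, x - y⟫ ≤ M * ‖x - y‖)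
    (hosc : ∀ x y, ‖x - x₀‖ ≤ R → ‖x - y‖ ≤ h →
      U x - U y - ⟪Z, x - y⟫ ≤ L * ‖x - y‖ - m / 2 * ‖x - y‖ ^ 2 + κ * R ^ 2)
    (hbd : ∀ x y, ‖x - x₀‖ ≤ R → ‖x - y‖ = h → U x - U y - ⟪Z, x - y⟫ ≤ L * h - m / 2 * h ^ 2)
    (hZ : ∀ w, L / 2 ≤ ‖w‖ → ‖w‖ ≤ L → ρ ≤ ‖Z + w‖) (hκR : 2 * κ * R < ρ)
    (hg : ∀ w K, L / 2 ≤ ‖w‖ → ‖w‖ ≤ L → ‖K‖ ≤ 2 * κ * R → g (Z + w) - g (Z + w + K) ≤ Λ * ‖K‖)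
    (hsmall : A * (2 * κ * R * Λ + 2 * κ * A + 4 * A * L * κ * M / ρ ^ 2) < 2 * m)
    {y₀ : E} (hy₀ : ‖x₀ - y₀‖ ≤ h) :
    U x₀ - U y₀ - ⟪Z, x₀ - y₀⟫ ≤ L * ‖x₀ - y₀‖ := by
  have : ProperSpace E := FiniteDimensional.proper_real E
  set G : E → ℝ := fun x => κ * ‖x - x₀‖ ^ 2
  set Φ := doubled U (penalty Z 0 L (-(m / 2))) G
  have hΦ : ∀ x y, Φ (x, y) = U x - U y - ⟪Z, x - y⟫ - L * ‖x - y‖ + m / 2 * ‖x - y‖ ^ 2 -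
      κ * ‖x - x₀‖ ^ 2 := fun x y => by
    simp only [Φ, doubled, penalty, sub_zero, G]
    ring
  have hS : ∀ z ∈ pairTube x₀ 0 R h, z.1 ∈ closedBall x₀ (R + h) ∧ z.2 ∈ closedBall x₀ (R + h) :=
    fun z hz => by simpa only [norm_zero, add_zero] using mem_closedBall_of_mem_pairTube hz
  have hcont : ContinuousOn Φ (pairTube x₀ 0 R h) :=
    continuousOn_doubled hU.continuousOn (continuous_penalty _ _ _ _) (by fun_prop) hS
  have hκr : ∀ x, 0 ≤ κ * ‖x - x₀‖ ^ 2 := fun x => by positivity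
  have hnonpos : ∀ z ∈ pairTube x₀ 0 R h, Φ z ≤ 0 := by
    refine le_of_isLocalMax_imp_le (isCompact_pairTube x₀ 0 R h) hcont ?interior ?localMax
    case interior =>
      rintro ⟨x, y⟩ ⟨hxR, hxy⟩ hpos
      refine pairTube_mem_nhds (hxR.lt_of_ne fun hr => ?_) (hxy.lt_of_ne fun ht => ?_) <;>
        rw [hΦ] at hpos <;> simp only [sub_zero] at hxR hxy
      · rw [hr] at hpos
        linarith [hosc x y hxR hxy]
      · rw [sub_zero] at ht
        have := hbd x y hxR ht
        rw [ht] at hpos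
        linarith [hκr x]
    case localMax =>
      rintro ⟨x, y⟩ hz hpos hmax
      obtain ⟨hxR, hxy⟩ := id hz
      simp only [sub_zero] at hxR hxy
      rw [hΦ] at hpos
      have hne : x ≠ y := by
        rintro rfl
        simp only [sub_self, inner_zero_right, norm_zero] at hpos
        linarith [hκr x]
      have hmt : m * ‖x - y‖ ≤ L / 2 := (mul_le_mul_of_nonneg_left hxy hm).trans hmh
      refine (hU.two_mul_le_of_isLocalMax_doubled hA (hS _ hz).1 (hS _ hz).2 hne hxR hL hm hκ hρ
        hΛ hmt ?_ hmax hZ hκR hg).not_gt hsmall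
      nlinarith [hlip x y hxR hxy, norm_nonneg (x - y)]
  have := hnonpos (x₀, y₀) ⟨by simpa using hR, by simpa using hy₀⟩
  rw [hΦ, sub_self, norm_zero] at this
  nlinarith [sq_nonneg ‖x₀ - y₀‖]

end IsNondivSolution

end LipschitzEstimate

section Propagation

open NormedSpace

theorem norm_unit_add_mem_Icc {E : Type*} [NormedAddCommGroup E] {n d : E}
    (hn : ‖n‖ = 1) (hd : ‖d‖ ≤ 1 / 4) :
    3 / 4 ≤ ‖n + d‖ ∧ ‖n + d‖ ≤ 5 / 4 :=
  ⟨by linarith [norm_sub_le_norm_add n d], by linarith [norm_add_le n d]⟩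

theorem le_norm_add_of_eq_zero_or_two_le {E : Type*} [NormedAddCommGroup E] {Z w : E} {c : ℝ}
    (hZ : Z = 0 ∨ 2 ≤ ‖Z‖) (hw : c ≤ ‖w‖) (hw' : ‖w‖ + c ≤ 2) : c ≤ ‖Z + w‖ := by
  rcases hZ with rfl | hZ
  · rwa [zero_add]
  · linarith [norm_sub_le_norm_add Z w]

variable {E : Type*} [NormedAddCommGroup E] [InnerProductSpace ℝ E]

theorem hasTaylorTwoAt_neg_mul_exp_norm_sub_sq (η k : ℝ) (c x : E) :
    HasTaylorTwoAt (fun w => -η * Real.exp (-(k * ‖w - c‖ ^ 2)))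
      (innerSL ℝ ((2 * η * k * Real.exp (-(k * ‖x - c‖ ^ 2))) • (x - c)))
      ((η * k * Real.exp (-(k * ‖x - c‖ ^ 2))) •
        ((2 : ℝ) • innerForm E -
          (4 * k) • (innerSL ℝ (x - c)).smulRight (innerSL ℝ (x - c)))) x := by
  convert (hasTaylorTwoAt_exp_norm_sub_sq k c x).const_mul (-η) using 1
  · rw [map_smul, smul_smul]
    ring_nf
  · refine ContinuousLinearMap.ext fun ξ => ContinuousLinearMap.ext fun ζ => ?_
    simp only [sub_apply, smul_apply, smul_eq_mul]
    ring

/-- The smallness conditions under which a loss `δ` of slope at distance `h` propagates: the pairs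
`(x, y)` range over `‖x - y - h • e‖ ≤ σ`, and the barrier is `η exp (-k ‖x - y₁‖²)`. -/
structure IsPropagationScale (A Λ h δ σ k η : ℝ) : Prop where
  h_pos : 0 < h
  h_le : h ≤ 1 / 8
  σ_pos : 0 < σ
  σ_le_h : σ ≤ h / 4
  σ_le_δ : σ ≤ δ / 8
  k_pos : 0 < k
  η_pos : 0 < η
  η_le_δ : η ≤ δ / 2
  η_le_σ : η ≤ σ / 8
  η_mul_k_le : η * k ≤ 1 / 4
  curvature_le : 2 * A * (2 / h + 1 / (4 * σ)) * (η * k) ≤ 1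
  barrier_lt : A * (Λ + 2 * A + 1) < 4 * k * σ ^ 2

theorem exists_isPropagationScale {A Λ h δ : ℝ} (hA : 1 ≤ A) (hΛ : 0 ≤ Λ) (hh : 0 < h)
    (hh' : h ≤ 1 / 8) (hδ : 0 < δ) : ∃ σ k η, IsPropagationScale A Λ h δ σ k η := by
  obtain ⟨σ, hσ, hσh, hσδ⟩ : ∃ σ > 0, σ ≤ h / 4 ∧ σ ≤ δ / 8 :=
    ⟨min (h / 4) (δ / 8), by positivity, min_le_left _ _, min_le_right _ _⟩
  set k := A * (Λ + 2 * A + 1) / σ ^ 2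
  set C := 2 * A * (2 / h + 1 / (4 * σ))
  have hk0 : 0 < k := by positivity
  have : 0 < C := by positivity
  obtain ⟨η, hη, hηδ, hησ, hηk, hηC⟩ :
      ∃ η > 0, η ≤ δ / 2 ∧ η ≤ σ / 8 ∧ η ≤ 1 / 4 / k ∧ η ≤ 1 / (C * k) :=
    ⟨min (min (δ / 2) (σ / 8)) (min (1 / 4 / k) (1 / (C * k))), by positivity, by simp, by simp,
      by simp, by simp⟩
  refine ⟨σ, k, η, hh, hh', hσ, hσh, hσδ, hk0, hη, hηδ, hησ, (le_div_iff₀ hk0).1 hηk, ?_, ?_⟩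
  · have := (le_div_iff₀ (by positivity)).1 hηC
    linarith
  · have hkσ : k * σ ^ 2 = A * (Λ + 2 * A + 1) := div_mul_cancel₀ _ (by positivity)
    have : 0 < A * (Λ + 2 * A + 1) := by positivity
    linarith

namespace IsPropagationScale

variable {A Λ h δ σ k η : ℝ}

theorem sub_le_norm_sub (hs : IsPropagationScale A Λ h δ σ k η) {e x y : E} (he : ‖e‖ = 1)
    (hxy : ‖x - y - h • e‖ ≤ σ) : h - σ ≤ ‖x - y‖ := by
  have hhe : ‖h • e‖ = h := by rw [norm_smul, he, mul_one, Real.norm_of_nonneg hs.h_pos.le]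
  have := norm_sub_norm_le (h • e) (x - y)
  rw [hhe, norm_sub_rev (h • e)] at this
  linarith

theorem curvature_term_le (hs : IsPropagationScale A Λ h δ σ k η) (hA : 0 ≤ A) {t b κ q : ℝ}
    (ht : h / 2 ≤ t) (hb : 0 ≤ b) (hb' : b ≤ 1) (hκ : 0 ≤ κ) (hκb : κ ≤ η * k * b)
    (hq : 3 / 4 ≤ q) :
    (1 / t + 2 * (η / σ ^ 2)) * (A * (κ / q) ^ 2) ≤ η * k * b := by
  obtain ⟨hh, -, hσ, -, -, hk, hη, -, hησ, -, hcurv, -⟩ := hs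
  have htime : 1 / t ≤ 2 / h := by
    calc 1 / t ≤ 1 / (h / 2) := by gcongr
      _ = 2 / h := one_div_div h 2
  have hpen : 2 * (η / σ ^ 2) ≤ 1 / (4 * σ) := by
    calc 2 * (η / σ ^ 2) ≤ 2 * (σ / 8 / σ ^ 2) := by gcongr
      _ = 1 / (4 * σ) := by
        field_simp
        norm_num
  have hratio : (κ / q) ^ 2 ≤ 2 * (η * k) ^ 2 * b := by
    calc (κ / q) ^ 2 ≤ (η * k * b / (3 / 4)) ^ 2 := by gcongr
      _ = 16 / 9 * (η * k) ^ 2 * (b * b) := by ring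
      _ ≤ 2 * (η * k) ^ 2 * (1 * b) := by
        gcongr
        norm_num
      _ = _ := by rw [one_mul]
  have : 0 < t := (half_pos hh).trans_le ht
  calc (1 / t + 2 * (η / σ ^ 2)) * (A * (κ / q) ^ 2)
      ≤ (2 / h + 1 / (4 * σ)) * (A * (2 * (η * k) ^ 2 * b)) := by gcongr
    _ = 2 * A * (2 / h + 1 / (4 * σ)) * (η * k) * (η * k * b) := by ring
    _ ≤ 1 * (η * k * b) := by gcongr
    _ = η * k * b := one_mul _

theorem not_barrier_nonneg (hs : IsPropagationScale A Λ h δ σ k η) (hA : 0 < A) {m r : ℝ}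
    (hm : 0 < m) (hr : σ ≤ r) :
    ¬ -(Λ * m) ≤ m + m * (2 * A - 4 * k * (r ^ 2 / A)) := by
  intro hle
  have hk := hs.k_pos
  have hσ := hs.σ_pos
  have hpos : 0 ≤ Λ + 1 + 2 * A - 4 * k * (r ^ 2 / A) :=
    nonneg_of_mul_nonneg_right (a := m) (by linarith) hm
  have hA' : A * (4 * k * (r ^ 2 / A)) = 4 * k * r ^ 2 := by field_simp
  have hsq : 4 * k * σ ^ 2 ≤ 4 * k * r ^ 2 := by gcongr
  have := mul_nonneg hA.le hpos
  linarith [hs.barrier_lt]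

theorem norm_penalty_slope_le (hs : IsPropagationScale A Λ h δ σ k η) {v : E}
    (hv : ‖v‖ ≤ σ) : ‖(2 * (η / σ ^ 2)) • v‖ ≤ 1 / 4 := by
  have hσ := hs.σ_pos
  have hη := hs.η_pos
  rw [norm_smul, Real.norm_of_nonneg (by positivity)]
  calc 2 * (η / σ ^ 2) * ‖v‖ ≤ 2 * (σ / 8 / σ ^ 2) * σ := by
        gcongr
        exact hs.η_le_σ
    _ = 1 / 4 := by
        field_simp
        norm_num

end IsPropagationScale

variable [FiniteDimensional ℝ E]

theorem IsEllipticityConstant.traceAlong_barrier_le {p A : ℝ} (hA : IsEllipticityConstant E p A)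
    {k : ℝ} (hk : 0 ≤ k) (P a : E) :
    traceAlong (coeffSqrt p P)
        ((2 : ℝ) • innerForm E - (4 * k) • (innerSL ℝ a).smulRight (innerSL ℝ a)) ≤
      2 * A - 4 * k * (‖a‖ ^ 2 / A) := by
  have hA0 : 0 < A := one_pos.trans_le hA.one_le
  rw [traceAlong_sub, map_smul, map_smul, traceAlong_coeffSqrt_smulRight_innerSL]
  have hlower : ‖a‖ ^ 2 / A ≤ ‖coeffSqrt p P a‖ ^ 2 := (div_le_iff₀' hA0).2 (hA.norm_sq_le P a)
  exact sub_le_sub (mul_le_mul_of_nonneg_left (hA.trace_le P) two_pos.le)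
    (mul_le_mul_of_nonneg_left hlower (by positivity))

theorem IsNondivSolution.doubling_parallel {p A : ℝ} {g U : E → ℝ} {S : Set E}
    (hU : IsNondivSolution p g U S) (hA : IsEllipticityConstant E p A)
    {G : E → ℝ} {x y v Z Q K : E} {L c : ℝ} {BG : E →L[ℝ] E →L[ℝ] ℝ} (hx : x ∈ S) (hy : y ∈ S)
    (hxy : x ≠ y) (hL : 0 ≤ L) (hc : 0 ≤ c)
    (hmax : IsLocalMax (doubled U (penalty Z v L c) G) (x, y))
    (hG : HasTaylorTwoAt G (innerSL ℝ K) BG x)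
    (hQ : Q = Z + L • normalize (x - y) + (2 * c) • (x - y - v)) (hQ0 : Q ≠ 0)
    (hQK : Q + K ≠ 0) :
    g (Q + K) - g Q ≤ (L / ‖x - y‖ + 2 * c) * (A * (‖K‖ / ‖Q‖) ^ 2) +
      traceAlong (coeffSqrt p (Q + K)) BG := by
  have hF := hasTaylorTwoAt_penalty Z v L c (sub_ne_zero.2 hxy)
  rw [← hQ] at hF
  have hkey := hU.doubling hx hy hmax hF hG hQ0 hQK (LinearIsometryEquiv.refl ℝ E)
  have hrefl : coeffSqrt p Q ∘L (LinearIsometryEquiv.refl ℝ E).toContinuousLinearEquiv =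
      coeffSqrt p Q := by
    ext
    rfl
  rw [hrefl] at hkey
  refine hkey.trans (add_le_add_left ?_ _)
  set e := normalize (x - y)
  set D := coeffSqrt p (Q + K) - coeffSqrt p Q
  have hnormal : 0 ≤ traceAlong D ((innerSL ℝ e).smulRight (innerSL ℝ e)) :=
    traceAlong_nonneg D fun ξ => mul_self_nonneg ⟪e, ξ⟫
  have hdiff : traceAlong D (innerForm E) ≤ A * (‖K‖ / ‖Q‖) ^ 2 := by
    simpa only [add_sub_cancel_left] using hA.trace_sub_le (Q + K) Q hQ0
  calc _ = (L / ‖x - y‖ + 2 * c) * traceAlong D (innerForm E) -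
        L / ‖x - y‖ * traceAlong D ((innerSL ℝ e).smulRight (innerSL ℝ e)) := by
        simp only [map_add, traceAlong_sub, map_smul, smul_eq_mul]
        ring
    _ ≤ (L / ‖x - y‖ + 2 * c) * (A * (‖K‖ / ‖Q‖) ^ 2) := by
        have := mul_nonneg (show 0 ≤ L / ‖x - y‖ by positivity) hnormal
        have := mul_le_mul_of_nonneg_left hdiff (show 0 ≤ L / ‖x - y‖ + 2 * c by positivity)
        linarith

/-- `U` has slope at most `1` on the unit ball once the linear function `⟪Z, ·⟫` is subtracted, and
`g` is `Λ`-Lipschitz on the slopes that `U` may then have. -/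
structure IsFlatSolution (p Λ : ℝ) (g U : E → ℝ) (Z : E) : Prop where
  solution : IsNondivSolution p g U (ball 0 1)
  lip : ∀ x ∈ ball (0 : E) 1, ∀ y ∈ ball (0 : E) 1, U x - U y - ⟪Z, x - y⟫ ≤ ‖x - y‖
  slope : Z = 0 ∨ 2 ≤ ‖Z‖
  drift : ∀ P Q, ‖P - Z‖ ≤ 3 → ‖Q - Z‖ ≤ 3 → |g P - g Q| ≤ Λ * ‖P - Q‖

namespace IsPropagationScale

variable {p A Λ h δ σ k η : ℝ} {g U : E → ℝ} {Z e x y y₁ : E}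

theorem lt_norm_sub_of_lt (hs : IsPropagationScale A Λ h δ σ k η) (hU : IsFlatSolution p Λ g U Z)
    (he : ‖e‖ = 1) (hy₁ : ‖y₁‖ < 1 / 8) (hgap : U y₁ - U (y₁ - h • e) - ⟪Z, h • e⟫ ≤ h - δ)
    (hx : x ∈ ball (0 : E) 1) (hy : y ∈ ball (0 : E) 1) (hxy : ‖x - y - h • e‖ ≤ σ)
    (hpos : ‖x - y‖ - η < U x - U y - ⟪Z, x - y⟫) : σ < ‖x - y₁‖ := by
  have hhe : ‖h • e‖ = h := by rw [norm_smul, he, mul_one, Real.norm_of_nonneg hs.h_pos.le]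
  by_contra! hle
  have hy₁mem : y₁ ∈ ball (0 : E) 1 := by
    rw [mem_ball_zero_iff]
    linarith
  have hy₁mem' : y₁ - h • e ∈ ball (0 : E) 1 := by
    rw [mem_ball_zero_iff]
    linarith [norm_sub_le y₁ (h • e), hs.h_le]
  have hlip := hU.lip x hx y₁ hy₁mem
  have hlip' := hU.lip (y₁ - h • e) hy₁mem' y hy
  have hnorm : ‖y₁ - h • e - y‖ ≤ 2 * σ := by
    calc ‖y₁ - h • e - y‖ = ‖(x - y - h • e) - (x - y₁)‖ := by congr 1; abel
      _ ≤ 2 * σ := (norm_sub_le _ _).trans (by linarith)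
  have hnorm' := hs.sub_le_norm_sub he hxy
  have hinner : ⟪Z, x - y⟫ = ⟪Z, x - y₁⟫ + ⟪Z, y₁ - h • e - y⟫ + ⟪Z, h • e⟫ := by
    rw [← inner_add_right, ← inner_add_right]
    congr 1
    abel
  linarith [hs.σ_le_δ, hs.η_le_δ]

theorem location (hs : IsPropagationScale A Λ h δ σ k η) (hU : IsFlatSolution p Λ g U Z)
    (he : ‖e‖ = 1) (hy₁ : ‖y₁‖ < 1 / 8) (hgap : U y₁ - U (y₁ - h • e) - ⟪Z, h • e⟫ ≤ h - δ)
    (hx : x ∈ ball (0 : E) 1) (hy : y ∈ ball (0 : E) 1) (hxy : ‖x - y - h • e‖ ≤ σ)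
    (hpos : η * Real.exp (-(k / 4)) < doubled U (penalty Z (h • e) 1 (η / σ ^ 2))
      (fun w => -η * Real.exp (-(k * ‖w - y₁‖ ^ 2))) (x, y)) :
    ‖x - y₁‖ < 1 / 2 ∧ ‖x - y - h • e‖ < σ ∧ σ < ‖x - y₁‖ := by
  have hη := hs.η_pos
  have hσ := hs.σ_pos
  set b := Real.exp (-(k * ‖x - y₁‖ ^ 2))
  set v := x - y - h • e
  have hlip := hU.lip x hx y hy
  have hexp : 0 < η * Real.exp (-(k / 4)) := by positivity
  have hb : η * b ≤ η * 1 :=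
    mul_le_mul_of_nonneg_left (Real.exp_le_one_iff.2 (neg_nonpos.2
      (mul_nonneg hs.k_pos.le (sq_nonneg _)))) hη.le
  have hv : 0 ≤ η / σ ^ 2 * ‖v‖ ^ 2 := by positivity
  have hpos' : η * Real.exp (-(k / 4)) <
      U x - U y - ⟪Z, x - y⟫ - ‖x - y‖ - η / σ ^ 2 * ‖v‖ ^ 2 + η * b := by
    simp only [doubled, penalty] at hpos
    linarith
  refine ⟨?_, ?_, hs.lt_norm_sub_of_lt hU he hy₁ hgap hx hy hxy (by linarith)⟩
  · have hlt : Real.exp (-(k / 4)) < b := lt_of_mul_lt_mul_left (by linarith) hη.le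
    have := Real.exp_lt_exp.1 hlt
    refine lt_of_pow_lt_pow_left₀ 2 (by norm_num) (lt_of_mul_lt_mul_left ?_ hs.k_pos.le)
    linarith
  · have hlt : η * (‖v‖ ^ 2 / σ ^ 2) < η * 1 := by
      have : η * (‖v‖ ^ 2 / σ ^ 2) = η / σ ^ 2 * ‖v‖ ^ 2 := by ring
      linarith
    have := (div_lt_one (by positivity)).1 (lt_of_mul_lt_mul_left hlt hη.le)
    exact lt_of_pow_lt_pow_left₀ 2 hσ.le this

theorem not_isLocalMax (hs : IsPropagationScale A Λ h δ σ k η) (hA : IsEllipticityConstant E p A)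
    (hΛ : 0 ≤ Λ) (hU : IsFlatSolution p Λ g U Z) (he : ‖e‖ = 1) (hx : x ∈ ball (0 : E) 1)
    (hy : y ∈ ball (0 : E) 1) (hxy : ‖x - y - h • e‖ ≤ σ) (hr : σ ≤ ‖x - y₁‖)
    (hr' : ‖x - y₁‖ ≤ 1 / 2) :
    ¬ IsLocalMax (doubled U (penalty Z (h • e) 1 (η / σ ^ 2))
      (fun w => -η * Real.exp (-(k * ‖w - y₁‖ ^ 2)))) (x, y) := by
  intro hmax
  have hη := hs.η_pos
  have hk := hs.k_pos
  have hA0 : 0 < A := one_pos.trans_le hA.one_le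
  have ht : h / 2 ≤ ‖x - y‖ := by linarith [hs.sub_le_norm_sub he hxy, hs.σ_le_h, hs.h_pos]
  have hxy0 : x - y ≠ 0 := norm_pos_iff.1 ((half_pos hs.h_pos).trans_le ht)
  set b := Real.exp (-(k * ‖x - y₁‖ ^ 2))
  have hb : b ≤ 1 := Real.exp_le_one_iff.2 (neg_nonpos.2 (by positivity))
  set w := normalize (x - y) + (2 * (η / σ ^ 2)) • (x - y - h • e) with hw
  obtain ⟨hw1, hw2⟩ := norm_unit_add_mem_Icc (norm_normalize hxy0) (hs.norm_penalty_slope_le hxy)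
  have hQ : Z + w = Z + (1 : ℝ) • normalize (x - y) + (2 * (η / σ ^ 2)) • (x - y - h • e) := by
    rw [one_smul, hw, add_assoc]
  have hQn : 3 / 4 ≤ ‖Z + w‖ := le_norm_add_of_eq_zero_or_two_le hU.slope hw1 (by linarith)
  set K := (2 * η * k * b) • (x - y₁)
  have hK : ‖K‖ ≤ η * k * b := by
    rw [norm_smul, Real.norm_of_nonneg (by positivity)]
    calc 2 * η * k * b * ‖x - y₁‖ ≤ 2 * η * k * b * (1 / 2) := by gcongr
      _ = η * k * b := by ring
  have hK' : ‖K‖ ≤ 1 / 4 := by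
    calc ‖K‖ ≤ η * k * 1 := hK.trans (by gcongr)
      _ ≤ 1 / 4 := by linarith [hs.η_mul_k_le]
  have hQK : Z + w + K ≠ 0 := norm_pos_iff.1 (by linarith [norm_sub_le_norm_add (Z + w) K])
  have hdrift : -(Λ * (η * k * b)) ≤ g (Z + w + K) - g (Z + w) := by
    have := hU.drift (Z + w + K) (Z + w)
      (by rw [add_assoc, add_sub_cancel_left]; linarith [norm_add_le w K])
      (by rw [add_sub_cancel_left]; linarith)
    rw [add_sub_cancel_left] at this
    linarith [abs_le.1 this, mul_le_mul_of_nonneg_left hK hΛ]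
  have hviscosity := hU.solution.doubling_parallel hA hx hy (sub_ne_zero.1 hxy0) one_pos.le
    (by positivity) hmax (hasTaylorTwoAt_neg_mul_exp_norm_sub_sq η k y₁ x) hQ
    (norm_pos_iff.1 (by linarith)) hQK
  have hcurv := hs.curvature_term_le hA0.le ht (Real.exp_pos _).le hb (norm_nonneg K) hK hQn
  have hbarrier := mul_le_mul_of_nonneg_left
    (hA.traceAlong_barrier_le hk.le (Z + w + K) (x - y₁)) (show 0 ≤ η * k * b by positivity)
  rw [map_smul, smul_eq_mul] at hviscosity
  exact hs.not_barrier_nonneg hA0 (show 0 < η * k * b by positivity) hr (by linarith)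

theorem propagation (hs : IsPropagationScale A Λ h δ σ k η) (hA : IsEllipticityConstant E p A)
    (hΛ : 0 ≤ Λ) (hU : IsFlatSolution p Λ g U Z) (he : ‖e‖ = 1) (hy₁ : ‖y₁‖ < 1 / 8)
    (hgap : U y₁ - U (y₁ - h • e) - ⟪Z, h • e⟫ ≤ h - δ) (hx : ‖x‖ < 1 / 8) :
    U x - U (x - h • e) - ⟪Z, h • e⟫ ≤
      h - η * (Real.exp (-(k / 16)) - Real.exp (-(k / 4))) := by
  have hhe : ‖h • e‖ = h := by rw [norm_smul, he, mul_one, Real.norm_of_nonneg hs.h_pos.le]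
  have hball : closedBall y₁ (1 / 2 + σ + ‖h • e‖) ⊆ ball 0 1 :=
    closedBall_subset_ball' (by
      rw [hhe, dist_zero_right]
      linarith [hs.h_le, hs.σ_le_h])
  have hmem : ∀ z ∈ pairTube y₁ (h • e) (1 / 2) σ, z.1 ∈ ball (0 : E) 1 ∧ z.2 ∈ ball (0 : E) 1 :=
    fun z hz => (mem_closedBall_of_mem_pairTube hz).imp (@hball _) (@hball _)
  have hdist : ‖x - y₁‖ ≤ 1 / 4 := (norm_sub_le _ _).trans (by linarith)
  have hx₀ : (x, x - h • e) ∈ pairTube y₁ (h • e) (1 / 2) σ :=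
    ⟨by simp only; linarith, by simpa using hs.σ_pos.le⟩
  have : ProperSpace E := FiniteDimensional.proper_real E
  have hmax : doubled U (penalty Z (h • e) 1 (η / σ ^ 2))
      (fun w => -η * Real.exp (-(k * ‖w - y₁‖ ^ 2))) (x, x - h • e) ≤ η * Real.exp (-(k / 4)) := by
    have hbarrier : Continuous fun w : E => -η * Real.exp (-(k * ‖w - y₁‖ ^ 2)) := by fun_prop
    refine le_of_isLocalMax_imp_le (isCompact_pairTube y₁ (h • e) (1 / 2) σ)
      (continuousOn_doubled hU.solution.continuousOn (continuous_penalty ..) hbarrier hmem)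
      (fun z hz hpos => ?_) (fun z hz hpos => ?_) _ hx₀ <;>
    obtain ⟨hfar, hσ, hnear⟩ :=
      hs.location hU he hy₁ hgap (hmem z hz).1 (hmem z hz).2 hz.2 hpos
    · exact pairTube_mem_nhds hfar hσ
    · exact hs.not_isLocalMax hA hΛ hU he (hmem z hz).1 (hmem z hz).2 hz.2 hnear.le hfar.le
  have hexp : Real.exp (-(k / 16)) ≤ Real.exp (-(k * ‖x - y₁‖ ^ 2)) := by
    have := mul_le_mul_of_nonneg_left (pow_le_pow_left₀ (norm_nonneg _) hdist 2) hs.k_pos.le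
    exact Real.exp_le_exp.2 (by linarith)
  have := mul_le_mul_of_nonneg_left hexp hs.η_pos.le
  simp only [doubled, penalty, sub_sub_cancel, sub_self, norm_zero, hhe] at hmax
  linarith

end IsPropagationScale

theorem IsEllipticityConstant.exists_propagation {p A : ℝ} (hA : IsEllipticityConstant E p A)
    {Λ h δ : ℝ} (hΛ : 0 ≤ Λ) (hh : 0 < h) (hh' : h ≤ 1 / 8) (hδ : 0 < δ) :
    ∃ η > 0, ∀ (g U : E → ℝ) (Z : E), IsFlatSolution p Λ g U Z →
      ∀ e y₁ : E, ‖e‖ = 1 → ‖y₁‖ < 1 / 8 → U y₁ - U (y₁ - h • e) - ⟪Z, h • e⟫ ≤ h - δ →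
        ∀ x : E, ‖x‖ < 1 / 8 → U x - U (x - h • e) - ⟪Z, h • e⟫ ≤ h - η := by
  obtain ⟨σ, k, η, hs⟩ := exists_isPropagationScale hA.one_le hΛ hh hh' hδ
  refine ⟨η * (Real.exp (-(k / 16)) - Real.exp (-(k / 4))),
    mul_pos hs.η_pos (sub_pos.2 (Real.exp_lt_exp.2 (by linarith [hs.k_pos]))), ?_⟩
  intro g U Z hU e y₁ he hy₁ hgap x hx
  exact hs.propagation hA hΛ hU he hy₁ hgap hx

end Propagation

section ImprovementOfFlatness

open NormedSpace

variable {E : Type*} [NormedAddCommGroup E] [InnerProductSpace ℝ E]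

theorem norm_add_smul_le {e : E} (he : ‖e‖ = 1) {h : ℝ} (hh : 0 < h) (ξ : E) :
    ‖ξ + h • e‖ ≤ h + ⟪e, ξ⟫ + ‖ξ‖ ^ 2 / (2 * h) := by
  have hsq : ‖ξ + h • e‖ ^ 2 = ‖ξ‖ ^ 2 + 2 * h * ⟪e, ξ⟫ + h ^ 2 := by
    rw [norm_add_sq_real, inner_smul_right, norm_smul, he, real_inner_comm,
      Real.norm_of_nonneg hh.le]
    ring
  have hgap : h + ⟪e, ξ⟫ + ‖ξ‖ ^ 2 / (2 * h) - ‖ξ + h • e‖ =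
      (‖ξ + h • e‖ - h) ^ 2 / (2 * h) := by
    field_simp
    linear_combination -hsq
  have : 0 ≤ (‖ξ + h • e‖ - h) ^ 2 / (2 * h) := by positivity
  linarith

theorem aligned_scale_small {A Λ h ρ : ℝ} (hA : 0 ≤ A) (hΛ : 0 ≤ Λ) (hh : 0 < h) (hρ : 0 < ρ)
    (hρ1 : ρ ≤ 1) (hρA : 8 * A * (Λ + 5 * A) * ρ < h) :
    A * (2 * (1 / h) * ρ * Λ + 2 * (1 / h) * A + 4 * A * (1 / 4) * (1 / h) * 2 / (1 / 2) ^ 2) <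
      2 * (1 / (8 * ρ)) := by
  calc _ = 2 * A * (ρ * Λ + 5 * A) / h := by
        field_simp
        ring
    _ ≤ 2 * A * (1 * Λ + 5 * A) / h := by gcongr
    _ < 2 * (1 / (8 * ρ)) := by
        rw [mul_one_div, div_lt_div_iff₀ hh (by positivity)]
        linarith

theorem loss_scale_small {A Λ h η : ℝ} (hA : 0 ≤ A) (hΛ : 0 ≤ Λ) (hh : 0 < h) (hη : 0 < η)
    (hhA : 10000 * A * (Λ + A) * h ^ 2 < 1) :
    A * (2 * (256 * h * η) * (1 / 16) * Λ + 2 * (256 * h * η) * A +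
      4 * A * (1 - η / 2) * (256 * h * η) * 1 / (1 / 4) ^ 2) < 2 * (η / h) := by
  have : 0 ≤ h * η * (A * Λ) := by positivity
  have : 0 ≤ h * η * (A * A) := by positivity
  have : 0 ≤ h * η * (A * A) * η := by positivity
  calc _ = h * η * (32 * (A * Λ) + 16896 * (A * A)) - 8192 * (h * η * (A * A) * η) := by ring
    _ ≤ 20000 * (A * (Λ + A)) * (h * η) := by linarith
    _ = 2 * (η / h) * (10000 * A * (Λ + A) * h ^ 2) := by
        field_simp
        ring
    _ < 2 * (η / h) * 1 := by gcongr
    _ = 2 * (η / h) := mul_one _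

theorem quadratic_correction_le {ρ t : ℝ} (hρ : 0 < ρ) (ht : 0 ≤ t) (htρ : t ≤ ρ) :
    1 / (8 * ρ) / 2 * t ^ 2 ≤ t / 16 := by
  calc 1 / (8 * ρ) / 2 * t ^ 2 = 1 / (8 * ρ) / 2 * t * t := by ring
    _ ≤ 1 / (8 * ρ) / 2 * t * ρ := by gcongr
    _ = t / 16 := by
      field_simp
      ring

variable [FiniteDimensional ℝ E] {p A Λ : ℝ} {g U : E → ℝ} {Z : E}

namespace IsFlatSolution

theorem sub_le_drift (hU : IsFlatSolution p Λ g U Z) {P K : E} (hPK : ‖P - Z‖ + ‖K‖ ≤ 3) :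
    g P - g (P + K) ≤ Λ * ‖K‖ := by
  have hK : ‖P + K - Z‖ ≤ 3 := by
    rw [add_sub_right_comm]
    exact (norm_add_le _ _).trans hPK
  have := hU.drift P (P + K) (by linarith [norm_nonneg K]) hK
  rw [sub_add_cancel_left, norm_neg] at this
  exact (le_abs_self _).trans this

theorem sub_le_of_aligned (hU : IsFlatSolution p Λ g U Z) {h δ : ℝ} (hh : 0 < h) {e x y : E}
    (he : ‖e‖ = 1) (hx : ‖x‖ < 1) (hy : ‖y‖ + h < 1)
    (hgap : h - δ ≤ U y - U (y - h • e) - ⟪Z, h • e⟫) :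
    U x - U y - ⟪Z + e, x - y⟫ ≤ δ + ‖x - y‖ ^ 2 / (2 * h) := by
  have hmem : y - h • e ∈ ball (0 : E) 1 := by
    rw [mem_ball_zero_iff]
    refine (norm_sub_le _ _).trans_lt ?_
    rwa [norm_smul, he, mul_one, Real.norm_of_nonneg hh.le]
  have hlip := hU.lip x (mem_ball_zero_iff.2 hx) (y - h • e) hmem
  rw [← sub_add, inner_add_right] at hlip
  rw [inner_add_left]
  linarith [norm_add_smul_le he hh (x - y)]

theorem oscillation_of_aligned (hU : IsFlatSolution p Λ g U Z) {h ρ : ℝ} (hh : 0 < h)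
    (hh' : h ≤ 1 / 8) (hρ : ρ ≤ 1 / 24) {e : E} (he : ‖e‖ = 1)
    (hgap : ∀ x : E, ‖x‖ < 1 / 8 → h - ρ ^ 2 / (2 * h) ≤ U x - U (x - h • e) - ⟪Z, h • e⟫)
    {x₀ x y : E} (hx₀ : ‖x₀‖ < ρ) (hx : ‖x - x₀‖ ≤ ρ) (hxy : ‖x - y‖ ≤ ρ) :
    U x - U y - ⟪Z + e, x - y⟫ ≤ 1 / h * ρ ^ 2 := by
  have := norm_le_norm_add_norm_sub' x x₀
  have hy : ‖y‖ < 1 / 8 := by linarith [norm_le_norm_add_norm_sub x y]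
  calc _ ≤ ρ ^ 2 / (2 * h) + ‖x - y‖ ^ 2 / (2 * h) :=
        hU.sub_le_of_aligned hh he (by linarith) (by linarith) (hgap y hy)
    _ ≤ ρ ^ 2 / (2 * h) + ρ ^ 2 / (2 * h) := by gcongr
    _ = 1 / h * ρ ^ 2 := by
      field_simp
      norm_num

theorem lip_add_unit (hU : IsFlatSolution p Λ g U Z) {e x y : E} (he : ‖e‖ = 1)
    (hx : x ∈ ball (0 : E) 1) (hy : y ∈ ball (0 : E) 1) :
    U x - U y - ⟪Z + e, x - y⟫ ≤ 2 * ‖x - y‖ := by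
  have hinner := neg_le_of_abs_le (abs_real_inner_le_norm e (x - y))
  rw [he, one_mul] at hinner
  rw [inner_add_left]
  linarith [hU.lip x hx y hy]

theorem lipschitz_of_aligned (hA : IsEllipticityConstant E p A) (hU : IsFlatSolution p Λ g U Z)
    (hΛ : 0 ≤ Λ) {h ρ : ℝ} (hh : 0 < h) (hh' : h ≤ 1 / 8) (hρ : 0 < ρ) (hρh : ρ ≤ h / 80)
    (hρA : 8 * A * (Λ + 5 * A) * ρ < h) {e : E} (he : ‖e‖ = 1)
    (hgap : ∀ x : E, ‖x‖ < 1 / 8 → h - ρ ^ 2 / (2 * h) ≤ U x - U (x - h • e) - ⟪Z, h • e⟫)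
    {x₀ y₀ : E} (hx₀ : ‖x₀‖ < ρ) (hy₀ : ‖x₀ - y₀‖ ≤ ρ) :
    U x₀ - U y₀ - ⟪Z + e, x₀ - y₀⟫ ≤ 1 / 4 * ‖x₀ - y₀‖ := by
  have hosc := fun x y hx hxy =>
    hU.oscillation_of_aligned (x := x) (y := y) hh hh' (by linarith) he hgap hx₀ hx hxy
  have hκ : 1 / h * ρ ≤ 1 / 80 := by
    rw [one_div_mul_eq_div, div_le_iff₀ hh]
    linarith
  have hκρ : 1 / h * ρ ^ 2 ≤ ρ / 80 := by
    calc 1 / h * ρ ^ 2 = 1 / h * ρ * ρ := by ring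
      _ ≤ 1 / 80 * ρ := by gcongr
      _ = _ := by ring
  have hball : closedBall x₀ (ρ + ρ) ⊆ ball 0 1 := closedBall_subset_ball' (by
    rw [dist_zero_right]
    linarith)
  have hlip : ∀ x y, ‖x - x₀‖ ≤ ρ → ‖x - y‖ ≤ ρ →
      U x - U y - ⟪Z + e, x - y⟫ ≤ 2 * ‖x - y‖ := by
    intro x y hx hxy
    have := norm_le_norm_add_norm_sub' x x₀
    refine hU.lip_add_unit he (mem_ball_zero_iff.2 (by linarith)) (mem_ball_zero_iff.2 ?_)
    linarith [norm_le_norm_add_norm_sub x y]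
  have hslope : 1 ≤ ‖Z + e‖ := le_norm_add_of_eq_zero_or_two_le hU.slope he.ge (by linarith)
  refine (hU.solution.mono hball).doubling_lipschitz hA (L := 1 / 4) (m := 1 / (8 * ρ))
    (κ := 1 / h) (ρ := 1 / 2) (M := 2) hρ.le (by norm_num) (by positivity) (by positivity)
    (by norm_num) hΛ (by field_simp; norm_num) hlip ?osc ?bd ?slope (by linarith) ?drift
    (aligned_scale_small (one_pos.trans_le hA.one_le).le hΛ hh hρ (by linarith) hρA) hy₀
  case osc =>
    intro x y hx hxy
    linarith [hosc x y hx hxy, quadratic_correction_le hρ (norm_nonneg (x - y)) hxy,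
      norm_nonneg (x - y)]
  case bd =>
    intro x y hx hxy
    linarith [hosc x y hx hxy.le, quadratic_correction_le hρ hρ.le le_rfl]
  case slope =>
    exact fun w _ hw => by linarith [norm_sub_le_norm_add (Z + e) w]
  case drift =>
    intro w K _ hw hK
    refine hU.sub_le_drift ?_
    rw [add_assoc, add_sub_cancel_left]
    linarith [norm_add_le e w]

theorem lipschitz_of_loss (hA : IsEllipticityConstant E p A) (hU : IsFlatSolution p Λ g U Z)
    (hΛ : 0 ≤ Λ) {h η : ℝ} (hh : 0 < h) (hh' : h ≤ 1 / 256)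
    (hhA : 10000 * A * (Λ + A) * h ^ 2 < 1) (hη : 0 < η) (hη' : η ≤ 1 / 4)
    (hgap : ∀ e x : E, ‖e‖ = 1 → ‖x‖ < 1 / 8 → U x - U (x - h • e) - ⟪Z, h • e⟫ ≤ h - h * η)
    {x₀ y₀ : E} (hx₀ : ‖x₀‖ < 1 / 32) (hy₀ : ‖x₀ - y₀‖ ≤ h) :
    U x₀ - U y₀ - ⟪Z, x₀ - y₀⟫ ≤ (1 - η / 2) * ‖x₀ - y₀‖ := by
  have hnear : ∀ x : E, ‖x - x₀‖ ≤ 1 / 16 → ‖x‖ < 1 / 8 := fun x hx => by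
    linarith [norm_le_norm_add_norm_sub' x x₀]
  have hlip : ∀ x y : E, ‖x - x₀‖ ≤ 1 / 16 → ‖x - y‖ ≤ h →
      U x - U y - ⟪Z, x - y⟫ ≤ 1 * ‖x - y‖ := by
    intro x y hx hxy
    rw [one_mul]
    refine hU.lip x (mem_ball_zero_iff.2 (by linarith [hnear x hx])) y (mem_ball_zero_iff.2 ?_)
    linarith [hnear x hx, norm_le_norm_add_norm_sub x y]
  have hhη : h * η ≤ 1 / 256 * (1 / 4) := by gcongr
  have hball : closedBall x₀ (1 / 16 + h) ⊆ ball 0 1 := closedBall_subset_ball' (by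
    rw [dist_zero_right]
    linarith)
  refine (hU.solution.mono hball).doubling_lipschitz hA (L := 1 - η / 2) (m := η / h)
    (κ := 256 * h * η) (ρ := 1 / 4) (M := 1) (by norm_num) (by linarith) (by positivity)
    (by positivity) (by norm_num) hΛ ?_ hlip ?osc ?bd ?slope (by linarith) ?drift
    (loss_scale_small (one_pos.trans_le hA.one_le).le hΛ hh hη hhA) hy₀
  · rw [div_mul_cancel₀ _ hh.ne']
    linarith
  case osc =>
    intro x y hx hxy
    have hquad : η / h / 2 * ‖x - y‖ ^ 2 ≤ η / 2 * h := by
      calc η / h / 2 * ‖x - y‖ ^ 2 ≤ η / h / 2 * h ^ 2 := by gcongr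
        _ = η / 2 * h := by field_simp
    have : η * ‖x - y‖ ≤ η * h := by gcongr
    linarith [hlip x y hx hxy]
  case bd =>
    intro x y hx hxy
    have hxy0 : x - y ≠ 0 := norm_pos_iff.1 (hxy ▸ hh)
    have := hgap (normalize (x - y)) x (norm_normalize hxy0) (hnear x hx)
    rw [← hxy, norm_smul_normalize, sub_sub_cancel, hxy] at this
    have hquad : η / h / 2 * h ^ 2 = h * η / 2 := by field_simp
    linarith
  case slope =>
    exact fun w hw hw' => le_norm_add_of_eq_zero_or_two_le hU.slope (by linarith) (by linarith)
  case drift =>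
    intro w K _ hw hK
    refine hU.sub_le_drift ?_
    rw [add_sub_cancel_left]
    linarith

end IsFlatSolution

theorem exists_flatness_scales {A Λ : ℝ} (hA : 1 ≤ A) (hΛ : 0 ≤ Λ) :
    ∃ h > 0, ∃ ρ > 0, h ≤ 1 / 256 ∧ 10000 * A * (Λ + A) * h ^ 2 < 1 ∧ ρ ≤ h / 80 ∧
      8 * A * (Λ + 5 * A) * ρ < h := by
  set B := A * (Λ + A)
  have hB : 1 ≤ B := one_le_mul_of_one_le_of_one_le hA (by linarith)
  have hh : 1 / (256 * B) ≤ 1 / 256 := one_div_le_one_div_of_le (by norm_num) (by linarith)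
  refine ⟨1 / (256 * B), by positivity, 1 / (256 * B) / (80 * B), by positivity, hh, ?_, ?_, ?_⟩
  · calc 10000 * A * (Λ + A) * (1 / (256 * B)) ^ 2 = B * (10000 * (1 / (256 * B)) ^ 2) := by ring
      _ = 10000 / 256 * (1 / (256 * B)) := by field_simp
      _ < 1 := by linarith
  · exact div_le_div_of_nonneg_left (by positivity) (by norm_num) (by linarith)
  · have hAΛ : 0 ≤ A * Λ := by positivity
    have hAB : 8 * A * (Λ + 5 * A) ≤ 40 * B := by
      simp only [B]
      linarith
    calc _ ≤ 40 * B * (1 / (256 * B) / (80 * B)) := by gcongr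
      _ = 1 / (256 * B) / 2 := by
          field_simp
          ring
      _ < 1 / (256 * B) := half_lt_self (by positivity)

/-- On the ball of radius `r`, `U` is an `ε`-Lipschitz perturbation of the linear function of slope
`Z`, and this slope is either zero or large compared with `ε`. -/
structure IsFlatOn (U : E → ℝ) (Z : E) (ε r : ℝ) : Prop where
  pos : 0 < ε
  slope : Z = 0 ∨ 2 * ε ≤ ‖Z‖
  lip : ∀ x ∈ ball (0 : E) r, ∀ y ∈ ball (0 : E) r, U x - U y - ⟪Z, x - y⟫ ≤ ε * ‖x - y‖

theorem IsEllipticityConstant.exists_improvement (hA : IsEllipticityConstant E p A) (hΛ : 0 ≤ Λ) :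
    ∃ r ∈ Ioo (0 : ℝ) 1, ∃ θ ∈ Ioo (0 : ℝ) 1, ∀ (g U : E → ℝ) (Z : E), IsFlatSolution p Λ g U Z →
      ∃ (Z' : E) (ε : ℝ), ε ≤ θ ∧ IsFlatOn U Z' ε r := by
  obtain ⟨h, hh, ρ, hρ, hh', hhA, hρh, hρA⟩ := exists_flatness_scales hA.one_le hΛ
  obtain ⟨η₀, hη₀, hprop⟩ := hA.exists_propagation hΛ hh (by linarith)
    (show 0 < ρ ^ 2 / (2 * h) by positivity)
  obtain ⟨η, hη, hηh, hη'⟩ : ∃ η > 0, η ≤ η₀ / h ∧ η ≤ 1 / 4 :=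
    ⟨min (η₀ / h) (1 / 4), by positivity, min_le_left _ _, min_le_right _ _⟩
  rw [le_div_iff₀' hh] at hηh
  refine ⟨ρ / 2, ⟨by positivity, by linarith⟩, 1 - η / 2, ⟨by linarith, by linarith⟩, ?_⟩
  intro g U Z hU
  have hdist : ∀ x ∈ ball (0 : E) (ρ / 2), ∀ y ∈ ball (0 : E) (ρ / 2),
      ‖x‖ < ρ / 2 ∧ ‖x - y‖ ≤ ρ := by
    intro x hx y hy
    rw [mem_ball_zero_iff] at hx hy
    exact ⟨hx, (norm_sub_le _ _).trans (by linarith)⟩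
  by_cases haligned : ∃ e : E, ‖e‖ = 1 ∧ ∀ x : E, ‖x‖ < 1 / 8 →
      h - ρ ^ 2 / (2 * h) ≤ U x - U (x - h • e) - ⟪Z, h • e⟫
  · obtain ⟨e, he, hgap⟩ := haligned
    have hslope : 1 ≤ ‖Z + e‖ := le_norm_add_of_eq_zero_or_two_le hU.slope he.ge (by linarith)
    refine ⟨Z + e, 1 / 4, by linarith, by norm_num, Or.inr (by linarith), fun x hx y hy => ?_⟩
    obtain ⟨hx', hxy⟩ := hdist x hx y hy
    exact hU.lipschitz_of_aligned hA hΛ hh (by linarith) hρ hρh hρA he hgap (by linarith) hxy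
  · push Not at haligned
    refine ⟨Z, 1 - η / 2, le_rfl, by linarith, hU.slope.imp_right fun hZ => by linarith,
      fun x hx y hy => ?_⟩
    obtain ⟨hx', hxy⟩ := hdist x hx y hy
    refine hU.lipschitz_of_loss hA hΛ hh hh' hhA hη hη' (fun e z he hz => ?_) (by linarith)
      (by linarith)
    obtain ⟨y₁, hy₁, hlt⟩ := haligned e he
    linarith [hprop g U Z hU e y₁ he hy₁ hlt.le z hz]

end ImprovementOfFlatness

section Iteration

theorem exists_pow_add_two_le_lt {r t : ℝ} (hr : r ∈ Ioo (0 : ℝ) 1) (ht : 0 < t) (ht1 : t < 1) :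
    ∃ k : ℕ, r ^ (k + 2) ≤ t ∧ t < r ^ k := by
  obtain ⟨n, hn, hn'⟩ := exists_nat_pow_near_of_lt_one ht ht1.le hr.1 hr.2
  rcases n with _ | n
  · exact ⟨0, (pow_le_pow_of_le_one hr.1.le hr.2.le (by norm_num)).trans hn.le, by simpa using ht1⟩
  · exact ⟨n, hn.le, hn'.trans_lt (pow_lt_pow_right_of_lt_one₀ hr.1 hr.2 (Nat.lt_succ_self n))⟩

theorem exists_le_rpow {r θ : ℝ} (hr : r ∈ Ioo (0 : ℝ) 1) (hθ : θ ∈ Ioo (0 : ℝ) 1) :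
    ∃ α ∈ Ioo (0 : ℝ) 1, θ ≤ r ^ α := by
  have hlog : 0 < Real.logb r θ := Real.logb_pos_of_base_lt_one hr.1 hr.2 hθ.1 hθ.2
  refine ⟨min (Real.logb r θ) (1 / 2), ⟨by positivity, by norm_num⟩, ?_⟩
  calc θ = r ^ Real.logb r θ := (Real.rpow_logb hr.1 hr.2.ne hθ.1).symm
    _ ≤ r ^ min (Real.logb r θ) (1 / 2) :=
      Real.rpow_le_rpow_of_exponent_ge hr.1 hr.2.le (min_le_left _ _)

theorem pow_le_inv_sq_mul_rpow {r θ α t : ℝ} (hr : r ∈ Ioo (0 : ℝ) 1) (hθ : 0 ≤ θ)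
    (hα : α ∈ Ioo (0 : ℝ) 1) (hθα : θ ≤ r ^ α) {k : ℕ} (ht : r ^ (k + 2) ≤ t) :
    θ ^ k ≤ (r ^ 2)⁻¹ * t ^ α := by
  have hr0 := hr.1
  have ht0 : 0 ≤ t := (pow_pos hr0 _).le.trans ht
  have hr2 : 1 ≤ (r ^ 2)⁻¹ := (one_le_inv₀ (by positivity)).2 (pow_le_one₀ hr0.le hr.2.le)
  have hrk : r ^ k ≤ (r ^ 2)⁻¹ * t := by
    rwa [inv_mul_eq_div, le_div_iff₀ (by positivity), ← pow_add]
  calc θ ^ k ≤ (r ^ α) ^ k := pow_le_pow_left₀ hθ hθα k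
    _ = (r ^ k) ^ α := Real.rpow_pow_comm hr0.le α k
    _ ≤ ((r ^ 2)⁻¹ * t) ^ α := Real.rpow_le_rpow (by positivity) hrk hα.1.le
    _ = (r ^ 2)⁻¹ ^ α * t ^ α := Real.mul_rpow (by positivity) ht0
    _ ≤ (r ^ 2)⁻¹ * t ^ α := by
      gcongr
      exact Real.rpow_le_self_of_one_le hr2 hα.2.le

theorem add_smul_mem_ball {E : Type*} [SeminormedAddCommGroup E] [NormedSpace ℝ E] (x₀ : E)
    {r : ℝ} (hr : 0 < r) {y : E} (hy : y ∈ ball (0 : E) 1) : x₀ + r • y ∈ ball x₀ r := by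
  rw [mem_ball_zero_iff] at hy
  rw [mem_ball_iff_norm, add_sub_cancel_left, norm_smul, Real.norm_of_nonneg hr.le]
  exact mul_lt_of_lt_one_right hr hy

variable {E : Type*} [NormedAddCommGroup E] [InnerProductSpace ℝ E]

theorem norm_sub_le_of_hasFDerivAt {U : E → ℝ} {P Z x : E} {ε : ℝ} {S : Set E}
    (hP : HasFDerivAt U (innerSL ℝ P) x) (hε : 0 ≤ ε) (hS : S ∈ 𝓝 x)
    (hlip : ∀ y ∈ S, ∀ z ∈ S, U y - U z - ⟪Z, y - z⟫ ≤ ε * ‖y - z‖) : ‖P - Z‖ ≤ ε := by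
  have hder : HasFDerivAt (fun y => U y - ⟪Z, y⟫) (innerSL ℝ (P - Z)) x := by
    rw [map_sub]
    exact hP.sub (innerSL ℝ Z).hasFDerivAt
  rw [← innerSL_apply_norm ℝ]
  refine hder.le_of_lip' hε ?_
  have hx : x ∈ S := mem_of_mem_nhds hS
  filter_upwards [hS] with y hy
  have hyx := hlip y hy x hx
  have hxy := hlip x hx y hy
  rw [inner_sub_right] at hyx hxy
  rw [norm_sub_rev x y] at hxy
  rw [Real.norm_eq_abs, abs_le]
  constructor <;> linarith

namespace IsFlatOn

variable {U : E → ℝ} {Z Z' : E} {ε ε' r ρ : ℝ}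

theorem norm_sub_le (hU : IsFlatOn U Z ε r) {P x : E} (hP : HasFDerivAt U (innerSL ℝ P) x)
    (hx : ‖x‖ < r) : ‖P - Z‖ ≤ ε :=
  norm_sub_le_of_hasFDerivAt hP hU.pos.le (isOpen_ball.mem_nhds (mem_ball_zero_iff.2 hx)) hU.lip

theorem of_rescale (hε : 0 < ε) (hρ : 0 < ρ)
    (hU : IsFlatOn (fun y => (ε * ρ)⁻¹ * U (0 + ρ • y)) Z' ε' r) :
    IsFlatOn U (ε • Z') (ε * ε') (ρ * r) := by
  have hmem : ∀ x ∈ ball (0 : E) (ρ * r), ρ⁻¹ • x ∈ ball (0 : E) r := by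
    intro x hx
    rw [mem_ball_zero_iff] at hx ⊢
    rwa [norm_smul, norm_inv, Real.norm_of_nonneg hρ.le, inv_mul_lt_iff₀ hρ]
  refine ⟨mul_pos hε hU.pos, hU.slope.imp (fun h => by rw [h, smul_zero]) fun h => ?_,
    fun x hx y hy => ?_⟩
  · rw [norm_smul, Real.norm_of_nonneg hε.le, mul_left_comm]
    exact mul_le_mul_of_nonneg_left h hε.le
  · have h := hU.lip _ (hmem x hx) _ (hmem y hy)
    simp only [zero_add, smul_inv_smul₀ hρ.ne'] at h
    rw [← smul_sub, real_inner_smul_right, norm_smul, norm_inv, Real.norm_of_nonneg hρ.le] at h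
    rw [real_inner_smul_left]
    calc U x - U y - ε * ⟪Z', x - y⟫
        = ε * ρ * ((ε * ρ)⁻¹ * U x - (ε * ρ)⁻¹ * U y - ρ⁻¹ * ⟪Z', x - y⟫) := by field_simp
      _ ≤ ε * ρ * (ε' * (ρ⁻¹ * ‖x - y‖)) := by gcongr
      _ = ε * ε' * ‖x - y‖ := by field_simp

theorem lip_rescale (hU : IsFlatOn U Z ε ρ) (hρ : 0 < ρ) {x y : E} (hx : x ∈ ball (0 : E) 1)
    (hy : y ∈ ball (0 : E) 1) :
    (ε * ρ)⁻¹ * U (0 + ρ • x) - (ε * ρ)⁻¹ * U (0 + ρ • y) - ⟪ε⁻¹ • Z, x - y⟫ ≤ ‖x - y‖ := by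
  have hε := hU.pos
  have h := hU.lip _ (add_smul_mem_ball 0 hρ hx) _ (add_smul_mem_ball 0 hρ hy)
  rw [add_sub_add_left_eq_sub, ← smul_sub, real_inner_smul_right, norm_smul,
    Real.norm_of_nonneg hρ.le] at h
  rw [real_inner_smul_left]
  calc _ = (ε * ρ)⁻¹ * (U (0 + ρ • x) - U (0 + ρ • y) - ρ * ⟪Z, x - y⟫) := by field_simp
    _ ≤ (ε * ρ)⁻¹ * (ε * (ρ * ‖x - y‖)) := by gcongr
    _ = ‖x - y‖ := by field_simp

variable {p Λ : ℝ} {g : E → ℝ}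

theorem drift_rescale (hε : 0 < ε) (hε1 : ε ≤ 1) (hρ : 0 < ρ) (hρ1 : ρ ≤ 1) (hΛ : 0 ≤ Λ)
    (hZ : ‖Z‖ ≤ 2)
    (hg : ∀ P Q, ‖P‖ ≤ 5 → ‖Q‖ ≤ 5 → |g P - g Q| ≤ Λ * ‖P - Q‖) {P Q : E}
    (hP : ‖P - ε⁻¹ • Z‖ ≤ 3) (hQ : ‖Q - ε⁻¹ • Z‖ ≤ 3) :
    |(ε * ρ)⁻¹ * ρ ^ 2 * g (((ε * ρ)⁻¹ * ρ)⁻¹ • P) -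
      (ε * ρ)⁻¹ * ρ ^ 2 * g (((ε * ρ)⁻¹ * ρ)⁻¹ • Q)| ≤ Λ * ‖P - Q‖ := by
  have hle5 : ∀ P : E, ‖P - ε⁻¹ • Z‖ ≤ 3 → ‖ε • P‖ ≤ 5 := fun P hP => by
    calc ‖ε • P‖ = ‖ε • (P - ε⁻¹ • Z) + Z‖ := by
          rw [smul_sub, smul_inv_smul₀ hε.ne', sub_add_cancel]
      _ ≤ ε * ‖P - ε⁻¹ • Z‖ + ‖Z‖ := by
          refine (norm_add_le _ _).trans_eq ?_
          rw [norm_smul, Real.norm_of_nonneg hε.le]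
      _ ≤ 1 * 3 + 2 := by gcongr
      _ = 5 := by norm_num
  have hcρ : ((ε * ρ)⁻¹ * ρ)⁻¹ = ε := by field_simp
  have hcρ2 : (ε * ρ)⁻¹ * ρ ^ 2 = ρ / ε := by field_simp
  have h := hg _ _ (hle5 P hP) (hle5 Q hQ)
  rw [← smul_sub, norm_smul, Real.norm_of_nonneg hε.le] at h
  rw [hcρ, hcρ2, ← mul_sub, abs_mul, abs_of_pos (by positivity)]
  calc ρ / ε * |g (ε • P) - g (ε • Q)| ≤ ρ / ε * (Λ * (ε * ‖P - Q‖)) := by gcongr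
    _ = ρ * (Λ * ‖P - Q‖) := by field_simp
    _ ≤ Λ * ‖P - Q‖ := mul_le_of_le_one_left (by positivity) hρ1

variable [FiniteDimensional ℝ E]

theorem norm_slope_le (hU : IsFlatOn U Z ε ρ) (hsol : IsNondivSolution p g U (ball 0 1))
    (hlip : ∀ x ∈ ball (0 : E) 1, ∀ y ∈ ball (0 : E) 1, U x - U y ≤ ‖x - y‖) (hρ : 0 < ρ)
    (hε : ε ≤ 1) : ‖Z‖ ≤ 2 := by
  obtain ⟨P, hP, -⟩ := hsol 0 (mem_ball_self one_pos)
  have hPZ := hU.norm_sub_le hP (by rwa [norm_zero])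
  have hP1 := norm_sub_le_of_hasFDerivAt (Z := 0) hP zero_le_one (ball_mem_nhds 0 one_pos)
    (fun x hx y hy => by simpa using hlip x hx y hy)
  rw [sub_zero] at hP1
  rw [norm_sub_rev] at hPZ
  linarith [norm_le_norm_add_norm_sub' Z P]

theorem isFlatSolution_rescale (hU : IsFlatOn U Z ε ρ) (hsol : IsNondivSolution p g U (ball 0 1))
    (hlip : ∀ x ∈ ball (0 : E) 1, ∀ y ∈ ball (0 : E) 1, U x - U y ≤ ‖x - y‖)
    (hg : ∀ P Q, ‖P‖ ≤ 5 → ‖Q‖ ≤ 5 → |g P - g Q| ≤ Λ * ‖P - Q‖) (hΛ : 0 ≤ Λ) (hρ : 0 < ρ)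
    (hρ1 : ρ ≤ 1) (hε : ε ≤ 1) :
    IsFlatSolution p Λ (fun P => (ε * ρ)⁻¹ * ρ ^ 2 * g (((ε * ρ)⁻¹ * ρ)⁻¹ • P))
      (fun y => (ε * ρ)⁻¹ * U (0 + ρ • y)) (ε⁻¹ • Z) where
  solution := hsol.rescale 0 (inv_pos.2 (mul_pos hU.pos hρ)) hρ fun _ hy =>
    ball_subset_ball hρ1 (add_smul_mem_ball 0 hρ hy)
  lip _ hx _ hy := hU.lip_rescale hρ hx hy
  slope := hU.slope.imp (fun h => by rw [h, smul_zero]) fun h => by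
    rwa [norm_smul, norm_inv, Real.norm_of_nonneg hU.pos.le, inv_mul_eq_div, le_div_iff₀ hU.pos]
  drift _ _ hP hQ := drift_rescale hU.pos hε hρ hρ1 hΛ (hU.norm_slope_le hsol hlip hρ hε) hg
    hP hQ

end IsFlatOn

variable [FiniteDimensional ℝ E] {p A Λ : ℝ}

theorem exists_isFlatOn_pow {r θ : ℝ} (hΛ : 0 ≤ Λ) (hr : r ∈ Ioo (0 : ℝ) 1)
    (hθ : θ ∈ Ioo (0 : ℝ) 1)
    (himp : ∀ (g U : E → ℝ) (Z : E), IsFlatSolution p Λ g U Z →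
      ∃ (Z' : E) (ε : ℝ), ε ≤ θ ∧ IsFlatOn U Z' ε r)
    {g U : E → ℝ} (hU : IsNondivSolution p g U (ball 0 1))
    (hlip : ∀ x ∈ ball (0 : E) 1, ∀ y ∈ ball (0 : E) 1, U x - U y ≤ ‖x - y‖)
    (hg : ∀ P Q, ‖P‖ ≤ 5 → ‖Q‖ ≤ 5 → |g P - g Q| ≤ Λ * ‖P - Q‖) (k : ℕ) :
    ∃ (Z : E) (ε : ℝ), ε ≤ θ ^ k ∧ IsFlatOn U Z ε (r ^ k) := by
  induction k with
  | zero =>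
    refine ⟨0, 1, (pow_zero θ).ge, one_pos, Or.inl rfl, fun x hx y hy => ?_⟩
    rw [pow_zero] at hx hy
    simpa using hlip x hx y hy
  | succ k ih =>
    obtain ⟨Z, ε, hεk, hflat⟩ := ih
    obtain ⟨Z', ε', hεθ, hflat'⟩ := himp _ _ _ <|
      hflat.isFlatSolution_rescale hU hlip hg hΛ (pow_pos hr.1 k) (pow_le_one₀ hr.1.le hr.2.le)
        (hεk.trans (pow_le_one₀ hθ.1.le hθ.2.le))
    refine ⟨ε • Z', ε * ε', ?_, ?_⟩
    · rw [pow_succ]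
      exact mul_le_mul hεk hεθ hflat'.pos.le (pow_nonneg hθ.1.le k)
    · rw [pow_succ]
      exact .of_rescale hflat.pos (pow_pos hr.1 k) hflat'

theorem IsEllipticityConstant.exists_gradient_holder (hA : IsEllipticityConstant E p A)
    (hΛ : 0 ≤ Λ) :
    ∃ C > 0, ∃ α ∈ Ioo (0 : ℝ) 1, ∀ g U : E → ℝ, IsNondivSolution p g U (ball 0 1) →
      (∀ x ∈ ball (0 : E) 1, ∀ y ∈ ball (0 : E) 1, U x - U y ≤ ‖x - y‖) →
      (∀ P Q, ‖P‖ ≤ 5 → ‖Q‖ ≤ 5 → |g P - g Q| ≤ Λ * ‖P - Q‖) →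
      ∀ x P P₀ : E, ‖x‖ < 1 → HasFDerivAt U (innerSL ℝ P) x → HasFDerivAt U (innerSL ℝ P₀) 0 →
        ‖P - P₀‖ ≤ C * ‖x‖ ^ α := by
  obtain ⟨r, hr, θ, hθ, himp⟩ := hA.exists_improvement hΛ
  obtain ⟨α, hα, hθα⟩ := exists_le_rpow hr hθ
  have hr0 := hr.1
  refine ⟨2 * (r ^ 2)⁻¹, by positivity, α, hα, ?_⟩
  intro g U hU hlip hg x P P₀ hx hP hP₀
  rcases eq_or_ne x 0 with rfl | hx0
  · rw [(innerSL_inj (𝕜 := ℝ)).1 (hP.unique hP₀), sub_self, norm_zero]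
    positivity
  obtain ⟨k, hkx, hxk⟩ := exists_pow_add_two_le_lt hr (norm_pos_iff.2 hx0) hx
  obtain ⟨Z, ε, hεk, hflat⟩ := exists_isFlatOn_pow hΛ hr hθ himp hU hlip hg k
  calc ‖P - P₀‖ = ‖(P - Z) - (P₀ - Z)‖ := by rw [sub_sub_sub_cancel_right]
    _ ≤ ε + ε := norm_sub_le_of_le (hflat.norm_sub_le hP hxk)
      (hflat.norm_sub_le hP₀ (norm_zero.trans_lt (pow_pos hr0 k)))
    _ = 2 * ε := (two_mul ε).symm
    _ ≤ 2 * ((r ^ 2)⁻¹ * ‖x‖ ^ α) := by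
      gcongr
      exact hεk.trans (pow_le_inv_sq_mul_rpow hr hθ.1.le hα hθα hkx)
    _ = 2 * (r ^ 2)⁻¹ * ‖x‖ ^ α := (mul_assoc _ _ _).symm

end Iteration

section PowerEstimates

theorem abs_rpow_sub_rpow_le {s B x y : ℝ} (hs : 1 ≤ s) (hx : x ∈ Icc 0 B) (hy : y ∈ Icc 0 B) :
    |x ^ s - y ^ s| ≤ s * B ^ (s - 1) * |x - y| := by
  refine (convex_Icc 0 B).norm_image_sub_le_of_norm_hasDerivWithin_le
    (fun t _ => (Real.hasDerivAt_rpow_const (Or.inr hs)).hasDerivWithinAt) (fun t ht => ?_) hy hx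
  have hpow : t ^ (s - 1) ≤ B ^ (s - 1) := Real.rpow_le_rpow ht.1 ht.2 (by linarith)
  rw [Real.norm_of_nonneg (mul_nonneg (by linarith) (Real.rpow_nonneg ht.1 _))]
  gcongr

theorem abs_mul_norm_rpow_sub_le {F : Type*} [SeminormedAddCommGroup F] {l Λ s B : ℝ}
    (hs : s ∈ Icc (1 : ℝ) 2) (hl : 0 ≤ l) (hlΛ : l ≤ Λ) {P Q : F} (hP : ‖P‖ ≤ B) (hQ : ‖Q‖ ≤ B) :
    |l * ‖P‖ ^ s - l * ‖Q‖ ^ s| ≤ 2 * Λ * B ^ (s - 1) * ‖P - Q‖ := by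
  have hB : 0 ≤ B := (norm_nonneg P).trans hP
  have hpow := abs_rpow_sub_rpow_le hs.1 ⟨norm_nonneg P, hP⟩ ⟨norm_nonneg Q, hQ⟩
  rw [← mul_sub, abs_mul, abs_of_nonneg hl]
  have hΛ : 0 ≤ Λ := hl.trans hlΛ
  calc l * |‖P‖ ^ s - ‖Q‖ ^ s| ≤ Λ * (s * B ^ (s - 1) * |‖P‖ - ‖Q‖|) := by gcongr
    _ ≤ Λ * (2 * B ^ (s - 1) * ‖P - Q‖) := by
      gcongr
      · exact hs.2
      · exact abs_norm_sub_norm_le P Q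
    _ = 2 * Λ * B ^ (s - 1) * ‖P - Q‖ := by ring

theorem two_mul_rpow_le {t α : ℝ} (ht : 0 ≤ t) (hα : α ≤ 1) : (2 * t) ^ α ≤ 2 * t ^ α := by
  rw [Real.mul_rpow zero_le_two ht]
  gcongr
  exact Real.rpow_le_self_of_one_le one_le_two hα

theorem eventually_mul_rpow_add_lt {β : ℝ} (hβ : β < 1) (a b : ℝ) :
    ∀ᶠ S in atTop, a * S ^ β + b < S := by
  have hlim : Tendsto (fun S : ℝ => a * S ^ (-(1 - β)) + b * S⁻¹) atTop (𝓝 0) := by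
    simpa using ((tendsto_rpow_neg_atTop (sub_pos.2 hβ)).const_mul a).add
      (tendsto_inv_atTop_zero.const_mul b)
  filter_upwards [hlim.eventually_lt_const one_pos, eventually_gt_atTop 0] with S hS hS0
  calc a * S ^ β + b = S * (a * S ^ (-(1 - β)) + b * S⁻¹) := by
        rw [neg_sub, Real.rpow_sub_one hS0.ne']
        field_simp
    _ < S := mul_lt_of_lt_one_right hS0 hS

end PowerEstimates

section InteriorGradientBound

variable {E : Type*} [NormedAddCommGroup E] [InnerProductSpace ℝ E]

theorem sub_le_of_norm_gradient_le {U : E → ℝ} {D : E → E} {T : Set E} {M : ℝ} (hT : Convex ℝ T)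
    (hD : ∀ x ∈ T, HasFDerivAt U (innerSL ℝ (D x)) x) (hM : ∀ x ∈ T, ‖D x‖ ≤ M) {x y : E}
    (hx : x ∈ T) (hy : y ∈ T) : U x - U y ≤ M * ‖x - y‖ :=
  (le_abs_self _).trans <| hT.norm_image_sub_le_of_norm_hasFDerivWithin_le
    (fun z hz => (hD z hz).hasFDerivWithinAt)
    (fun z hz => (innerSL_apply_norm ℝ (D z)).trans_le (hM z hz)) hy hx

theorem norm_le_of_eventually_sub_le {U : E → ℝ} {P x : E} {L : ℝ}
    (hP : HasFDerivAt U (innerSL ℝ P) x) (hL : 0 ≤ L)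
    (hUL : ∀ᶠ y in 𝓝 x, U x - U y ≤ L * ‖x - y‖) : ‖P‖ ≤ L := by
  rcases eq_or_ne P 0 with rfl | hP0
  · rwa [norm_zero]
  have hline : HasDerivAt (fun t : ℝ => x - t • P) (-P) 0 := by
    simpa using ((hasDerivAt_id (0 : ℝ)).smul_const P).const_sub x
  have hder : HasDerivAt (fun t : ℝ => U (x - t • P)) (-‖P‖ ^ 2) 0 := by
    simpa [Function.comp_def] using hP.comp_hasDerivAt_of_eq (0 : ℝ) hline (by simp)
  have hcont : Tendsto (fun t : ℝ => x - t • P) (𝓝[>] 0) (𝓝 x) := by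
    simpa using hline.continuousAt.tendsto.mono_left nhdsWithin_le_nhds
  have hslope : -(L * ‖P‖) ≤ -‖P‖ ^ 2 := by
    refine ge_of_tendsto hder.tendsto_slope_zero_right ?_
    filter_upwards [hcont.eventually hUL, self_mem_nhdsWithin] with t ht (ht0 : 0 < t)
    rw [sub_sub_cancel, norm_smul, Real.norm_of_nonneg ht0.le] at ht
    rw [zero_add, zero_smul, sub_zero, smul_eq_mul, le_inv_mul_iff₀ ht0]
    linarith
  have : ‖P‖ * ‖P‖ ≤ L * ‖P‖ := by linarith
  exact le_of_mul_le_mul_right this (norm_pos_iff.2 hP0)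

variable [FiniteDimensional ℝ E]

theorem IsNondivSolution.sub_le_of_rpow_drift {p s l Λ A K : ℝ} {U : E → ℝ}
    (hU : IsNondivSolution p (fun P => l * ‖P‖ ^ s) U (closedBall 0 (1 / 2)))
    (hA : IsEllipticityConstant E p A) (hs : s ∈ Icc (1 : ℝ) 2) (hl : 0 ≤ l) (hlΛ : l ≤ Λ)
    (hK : 64 < K) (hKA : 16 * A * Λ * K ^ (s - 1) + 1056 * A ^ 2 < K)
    (hlip : ∀ x ∈ closedBall (0 : E) (1 / 2), ∀ y ∈ closedBall (0 : E) (1 / 2),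
      U x - U y ≤ 2 * K * ‖x - y‖)
    (hosc : ∀ x ∈ closedBall (0 : E) (1 / 2), ∀ y ∈ closedBall (0 : E) (1 / 2), U x - U y ≤ 2)
    {y : E} (hy : ‖0 - y‖ ≤ 1 / 4) : U 0 - U y ≤ K / 2 * ‖0 - y‖ := by
  have hpair : ∀ x y : E, ‖x‖ ≤ 1 / 4 → ‖x - y‖ ≤ 1 / 4 →
      x ∈ closedBall (0 : E) (1 / 2) ∧ y ∈ closedBall (0 : E) (1 / 2) := fun x y hx hxy => by
    rw [mem_closedBall_zero_iff, mem_closedBall_zero_iff]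
    exact ⟨by linarith, by linarith [norm_le_norm_add_norm_sub x y]⟩
  have hΛK : 0 ≤ 2 * Λ * K ^ (s - 1) := by
    have : 0 ≤ Λ := hl.trans hlΛ
    positivity
  have h := (hU.mono (closedBall_subset_closedBall (by norm_num))).doubling_lipschitz hA
    (x₀ := 0) (Z := 0) (R := 1 / 4) (h := 1 / 4) (L := K / 2) (m := K) (κ := 32) (ρ := K / 4)
    (M := 2 * K) (by norm_num) (by linarith) (by linarith) (by norm_num) (by linarith) hΛK
    (by linarith) ?lip ?osc ?bd ?slope (by linarith) ?drift ?small hy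
  · rwa [inner_zero_left, sub_zero] at h
  case' lip | osc | bd | slope | drift => simp only [inner_zero_left, sub_zero, zero_add]
  case lip =>
    intro x y hx hxy
    exact hlip x (hpair x y hx hxy).1 y (hpair x y hx hxy).2
  case osc =>
    intro x y hx hxy
    have : 0 ≤ K / 2 * (‖x - y‖ * (1 - ‖x - y‖)) :=
      mul_nonneg (by linarith) (mul_nonneg (norm_nonneg _) (by linarith))
    linarith [hosc x (hpair x y hx hxy).1 y (hpair x y hx hxy).2]
  case bd =>
    intro x y hx hxy
    linarith [hosc x (hpair x y hx hxy.le).1 y (hpair x y hx hxy.le).2]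
  case slope =>
    intro w hw _
    linarith
  case drift =>
    intro w k _ hw hk
    have hwk : ‖w + k‖ ≤ K := (norm_add_le w k).trans (by linarith)
    have := abs_mul_norm_rpow_sub_le hs hl hlΛ (show ‖w‖ ≤ K by linarith) hwk
    rw [sub_add_cancel_left, norm_neg] at this
    exact (le_abs_self _).trans this
  case small =>
    calc _ = 2 * (16 * A * Λ * K ^ (s - 1) + 1056 * A ^ 2) := by
          field_simp
          ring
      _ < 2 * K := by gcongr

/-- `U` is a solution of `tr (A(∇U) D²U) = l |∇U| ^ s` on `S` with `|U| ≤ M` there, whose gradient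
is the continuous field `D`. -/
structure IsBoundedSolution (p s l M : ℝ) (U : E → ℝ) (D : E → E) (S : Set E) : Prop where
  solution : IsNondivSolution p (fun P => l * ‖P‖ ^ s) U S
  hasFDerivAt : ∀ x ∈ S, HasFDerivAt U (innerSL ℝ (D x)) x
  continuousOn : ContinuousOn D S
  abs_le : ∀ x ∈ S, |U x| ≤ M

namespace IsBoundedSolution

variable {p s l M Λ A : ℝ} {U : E → ℝ} {D : E → E} {S T : Set E}

theorem rescale (hU : IsBoundedSolution p s l M U D S) (x₀ : E) {c r : ℝ} (hc : 0 < c)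
    (hr : 0 < r) (hT : ∀ y ∈ T, x₀ + r • y ∈ S) :
    IsBoundedSolution p s (l * (c ^ (1 - s) * r ^ (2 - s))) (c * M) (fun y => c * U (x₀ + r • y))
      (fun y => (c * r) • D (x₀ + r • y)) T where
  solution := by
    convert hU.solution.rescale x₀ hc hr hT using 2 with P
    rw [norm_smul, norm_inv, Real.norm_of_nonneg (by positivity),
      Real.mul_rpow (by positivity) (norm_nonneg P), Real.inv_rpow (by positivity),
      Real.mul_rpow hc.le hr.le, Real.rpow_sub hc, Real.rpow_sub hr, Real.rpow_one, Real.rpow_two]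
    field_simp
  hasFDerivAt y hy := hasFDerivAt_comp_affine c (hU.hasFDerivAt _ (hT y hy))
  continuousOn := (hU.continuousOn.comp (by fun_prop) hT).const_smul (c * r)
  abs_le y hy := by
    rw [abs_mul, abs_of_pos hc]
    gcongr
    exact hU.abs_le _ (hT y hy)

theorem sub_le (hU : IsBoundedSolution p s l M U D S) {x y : E} (hx : x ∈ S) (hy : y ∈ S) :
    U x - U y ≤ 2 * M := by
  have hUx := (_root_.abs_le.1 (hU.abs_le x hx)).2
  have hUy := (_root_.abs_le.1 (hU.abs_le y hy)).1
  linarith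

theorem norm_gradient_le_half (hA : IsEllipticityConstant E p A) (hs : s ∈ Icc (1 : ℝ) 2)
    (hl : 0 ≤ l) (hlΛ : l ≤ Λ) (hU : IsBoundedSolution p s l 1 U D (closedBall 0 (1 / 2)))
    {K : ℝ} (hK : 64 < K) (hKA : 16 * A * Λ * K ^ (s - 1) + 1056 * A ^ 2 < K)
    (hD : ∀ x ∈ closedBall (0 : E) (1 / 2), ‖D x‖ ≤ 2 * K) : ‖D 0‖ ≤ K / 2 := by
  refine norm_le_of_eventually_sub_le (hU.hasFDerivAt 0 (mem_closedBall_self (by norm_num)))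
    (by linarith) ?_
  filter_upwards [closedBall_mem_nhds (0 : E) (show (0 : ℝ) < 1 / 4 by norm_num)] with y hy
  refine hU.solution.sub_le_of_rpow_drift hA hs hl hlΛ hK hKA (fun x hx z hz => ?_)
    (fun x hx z hz => (hU.sub_le hx hz).trans_eq (mul_one 2)) ?_
  · exact sub_le_of_norm_gradient_le (convex_closedBall 0 _) hU.hasFDerivAt hD hx hz
  · rwa [zero_sub, norm_neg, ← mem_closedBall_zero_iff]

/-- If the weighted gradient `(3/4 - |x|) |D x|` is maximal at `x₀`, rescaling by the weight turns
the maximality into the a priori bound of `norm_gradient_le_half`. -/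
theorem mul_norm_gradient_le_half (hA : IsEllipticityConstant E p A) (hs : s ∈ Ico (1 : ℝ) 2)
    (hl : 0 ≤ l) (hlΛ : l ≤ Λ) (hU : IsBoundedSolution p s l 1 U D (ball 0 1)) {x₀ : E}
    (hmax : ∀ z, ‖z‖ ≤ 3 / 4 → (3 / 4 - ‖z‖) * ‖D z‖ ≤ (3 / 4 - ‖x₀‖) * ‖D x₀‖)
    (hK : 64 < (3 / 4 - ‖x₀‖) * ‖D x₀‖)
    (hKA : 16 * A * Λ * ((3 / 4 - ‖x₀‖) * ‖D x₀‖) ^ (s - 1) + 1056 * A ^ 2 <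
      (3 / 4 - ‖x₀‖) * ‖D x₀‖) :
    (3 / 4 - ‖x₀‖) * ‖D x₀‖ ≤ (3 / 4 - ‖x₀‖) * ‖D x₀‖ / 2 := by
  set d := 3 / 4 - ‖x₀‖ with hd
  have hd0 : 0 < d := pos_of_mul_pos_left (by linarith) (norm_nonneg _)
  have hnorm : ∀ y ∈ closedBall (0 : E) (1 / 2), ‖x₀ + d • y‖ ≤ 3 / 4 - d / 2 := fun y hy => by
    rw [mem_closedBall_zero_iff] at hy
    calc ‖x₀ + d • y‖ ≤ ‖x₀‖ + d * ‖y‖ := by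
          refine (norm_add_le _ _).trans_eq ?_
          rw [norm_smul, Real.norm_of_nonneg hd0.le]
      _ ≤ ‖x₀‖ + d * (1 / 2) := by gcongr
      _ = 3 / 4 - d / 2 := by linarith
  have hV := hU.rescale (T := closedBall 0 (1 / 2)) x₀ one_pos hd0 fun y hy => by
    rw [mem_ball_zero_iff]
    linarith [hnorm y hy]
  simp only [Real.one_rpow, one_mul] at hV
  have hld : l * d ^ (2 - s) ≤ l :=
    mul_le_of_le_one_right hl (Real.rpow_le_one hd0.le (by linarith [norm_nonneg x₀])
      (by linarith [hs.2]))
  have h := hV.norm_gradient_le_half hA ⟨hs.1, hs.2.le⟩ (by positivity) (hld.trans hlΛ) hK hKA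
    fun y hy => ?_
  · rwa [smul_zero, add_zero, norm_smul, Real.norm_of_nonneg hd0.le] at h
  · have hy' := hnorm y hy
    calc ‖d • D (x₀ + d • y)‖ = 2 * (d / 2 * ‖D (x₀ + d • y)‖) := by
          rw [norm_smul, Real.norm_of_nonneg hd0.le]
          ring
      _ ≤ 2 * ((3 / 4 - ‖x₀ + d • y‖) * ‖D (x₀ + d • y)‖) := by
          gcongr
          linarith
      _ ≤ 2 * (d * ‖D x₀‖) := mul_le_mul_of_nonneg_left (hmax _ (by linarith)) zero_le_two

theorem exists_norm_gradient_le (hA : IsEllipticityConstant E p A) (hs : s ∈ Ico (1 : ℝ) 2) :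
    ∃ C > 0, ∀ (l : ℝ) (U : E → ℝ) (D : E → E), 0 ≤ l → l ≤ Λ →
      IsBoundedSolution p s l 1 U D (ball 0 1) → ∀ x, ‖x‖ ≤ 1 / 2 → ‖D x‖ ≤ C := by
  obtain ⟨K₀, hK₀⟩ := eventually_atTop.1 <| (eventually_gt_atTop (64 : ℝ)).and <|
    eventually_mul_rpow_add_lt (show s - 1 < 1 by linarith [hs.2]) (16 * A * Λ) (1056 * A ^ 2)
  have hK₀pos : 0 < K₀ := by linarith [(hK₀ K₀ le_rfl).1]
  refine ⟨4 * K₀, by positivity, fun l U D hl hlΛ hU x hx => ?_⟩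
  have hsub : closedBall (0 : E) (3 / 4) ⊆ ball 0 1 := closedBall_subset_ball (by norm_num)
  have : ProperSpace E := FiniteDimensional.proper_real E
  obtain ⟨x₀, -, hmax⟩ := (isCompact_closedBall (0 : E) (3 / 4)).exists_isMaxOn
    ⟨0, mem_closedBall_self (by norm_num)⟩ (f := fun x => (3 / 4 - ‖x‖) * ‖D x‖)
    ((continuousOn_const.sub continuousOn_id.norm).mul (hU.continuousOn.mono hsub).norm)
  have hmax' : ∀ z, ‖z‖ ≤ 3 / 4 → (3 / 4 - ‖z‖) * ‖D z‖ ≤ (3 / 4 - ‖x₀‖) * ‖D x₀‖ :=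
    fun z hz => hmax (mem_closedBall_zero_iff.2 hz)
  suffices hS : (3 / 4 - ‖x₀‖) * ‖D x₀‖ < K₀ by
    have hxmax := hmax' x (by linarith)
    have : 1 / 4 * ‖D x‖ ≤ (3 / 4 - ‖x‖) * ‖D x‖ := by gcongr; linarith
    linarith
  by_contra! hK
  obtain ⟨hK64, hKA⟩ := hK₀ _ hK
  exact absurd (hU.mul_norm_gradient_le_half hA hs hl hlΛ hmax' hK64 hKA) (by linarith)

theorem exists_local_estimate (hA : IsEllipticityConstant E p A) (hs : s ∈ Ico (1 : ℝ) 2)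
    (hΛ : 0 ≤ Λ) :
    ∃ C > 0, ∃ α ∈ Ioo (0 : ℝ) 1, ∀ (l : ℝ) (U : E → ℝ) (D : E → E), 0 ≤ l → l ≤ Λ →
      IsBoundedSolution p s l 1 U D (ball 0 1) →
      (∀ x, ‖x‖ ≤ 1 / 2 → ‖D x‖ ≤ C) ∧ ∀ x, ‖x‖ < 1 / 2 → ‖D x - D 0‖ ≤ C * ‖x‖ ^ α := by
  obtain ⟨C₀, hC₀, hbound⟩ := exists_norm_gradient_le (Λ := Λ) hA hs
  obtain ⟨C₁, hC₁, α, hα, hholder⟩ := hA.exists_gradient_holder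
    (show 0 ≤ 2 * (Λ * ((2 / C₀) ^ (1 - s) * (1 / 2) ^ (2 - s))) * 5 ^ (s - 1) by positivity)
  refine ⟨C₀ + 2 * C₀ * C₁, by positivity, α, hα, fun l U D hl hlΛ hU => ?_⟩
  have hD := hbound l U D hl hlΛ hU
  refine ⟨fun x hx => (hD x hx).trans (le_add_of_nonneg_right (by positivity)), fun x hx => ?_⟩
  have hhalf : ∀ y ∈ ball (0 : E) 1, (0 : E) + (1 / 2 : ℝ) • y ∈ ball (0 : E) (1 / 2) :=
    fun y hy => add_smul_mem_ball 0 one_half_pos hy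
  have hV := hU.rescale 0 (show 0 < 2 / C₀ by positivity) one_half_pos fun y hy =>
    ball_subset_ball (by norm_num) (hhalf y hy)
  rw [show 2 / C₀ * (1 / 2) = C₀⁻¹ by field_simp] at hV
  have hx1 : ‖(2 : ℝ) • x‖ < 1 := by
    rw [norm_smul, Real.norm_of_nonneg zero_le_two]
    linarith
  have h := hholder _ _ hV.solution (fun y hy z hz => ?lip) (fun P Q hP hQ => ?drift)
    ((2 : ℝ) • x) _ _ hx1 (hV.hasFDerivAt _ (mem_ball_zero_iff.2 hx1))
    (hV.hasFDerivAt 0 (mem_ball_self one_pos))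
  case lip =>
    rw [← one_mul ‖y - z‖]
    refine sub_le_of_norm_gradient_le (convex_ball 0 1) hV.hasFDerivAt (fun w hw => ?_) hy hz
    rw [norm_smul, norm_inv, Real.norm_of_nonneg hC₀.le, inv_mul_le_iff₀ hC₀, mul_one]
    exact hD _ (mem_ball_zero_iff.1 (hhalf w hw)).le
  case drift =>
    exact abs_mul_norm_rpow_sub_le ⟨hs.1, hs.2.le⟩ (by positivity) (by gcongr) hP hQ
  rw [zero_add, smul_smul, one_div, inv_mul_cancel₀ two_ne_zero, one_smul, smul_zero, zero_add,
    ← smul_sub, norm_smul, norm_smul, norm_inv, Real.norm_of_nonneg hC₀.le,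
    Real.norm_of_nonneg zero_le_two, inv_mul_le_iff₀ hC₀] at h
  calc ‖D x - D 0‖ ≤ C₀ * (C₁ * (2 * ‖x‖) ^ α) := h
    _ ≤ C₀ * (C₁ * (2 * ‖x‖ ^ α)) := by
      gcongr
      exact two_mul_rpow_le (norm_nonneg x) hα.2.le
    _ = 2 * C₀ * C₁ * ‖x‖ ^ α := by ring
    _ ≤ (C₀ + 2 * C₀ * C₁) * ‖x‖ ^ α := by
      gcongr
      exact le_add_of_nonneg_left hC₀.le

end IsBoundedSolution

end InteriorGradientBound

section Divergence

variable {E : Type*} [NormedAddCommGroup E] [InnerProductSpace ℝ E] [FiniteDimensional ℝ E]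

theorem traceAlong_one_innerForm_comp (T : E →L[ℝ] E) :
    traceAlong 1 (innerForm E ∘L T) = LinearMap.trace ℝ E (T : E →ₗ[ℝ] E) := by
  rw [traceAlong_apply, LinearMap.trace_eq_sum_inner _ (stdOrthonormalBasis ℝ E)]
  exact Finset.sum_congr rfl fun i _ => real_inner_comm _ _

theorem trace_fderiv_norm_rpow_smul {p : ℝ} (hp : 1 ≤ p) {V : E → E} {T : E →L[ℝ] E} {x : E}
    (hV : HasFDerivAt V T x) (hx : V x ≠ 0) :
    LinearMap.trace ℝ E (fderiv ℝ (fun y => ‖V y‖ ^ (p - 2) • V y) x : E →ₗ[ℝ] E) =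
      ‖V x‖ ^ (p - 2) * traceAlong (coeffSqrt p (V x)) (innerForm E ∘L T) := by
  have hVx : 0 < ‖V x‖ := norm_pos_iff.2 hx
  have hnorm := (hasFDerivAt_norm_of_ne_zero hx).comp x hV
  have hfield := (hnorm.rpow_const (p := p - 2) (Or.inl hVx.ne')).smul hV
  have hnormal : ⟪T (NormedSpace.normalize (V x)), NormedSpace.normalize (V x)⟫ =
      ‖V x‖⁻¹ ^ 2 * ⟪V x, T (V x)⟫ := by
    simp only [NormedSpace.normalize, map_smul, real_inner_smul_left, real_inner_smul_right]
    rw [real_inner_comm]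
    ring
  have hfderiv : fderiv ℝ (fun y => ‖V y‖ ^ (p - 2) • V y) x = _ := hfield.fderiv
  rw [hfderiv, traceAlong_coeffSqrt hp hx, traceAlong_one_innerForm_comp,
    ContinuousLinearMap.comp_apply, innerForm_apply, hnormal]
  simp only [Function.comp_apply, ContinuousLinearMap.toLinearMap_add,
    ContinuousLinearMap.toLinearMap_smul,
    map_add, map_smul, smul_eq_mul, ContinuousLinearMap.coe_smulRight, LinearMap.trace_smulRight]
  rw [Real.rpow_sub_one hVx.ne']
  simp
  field_simp

end Divergence

namespace IsStrongSolution

variable {N : ℕ} {p q : ℝ} {G : Set (EuclideanSpace ℝ (Fin N))} {u : EuclideanSpace ℝ (Fin N) → ℝ}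
  {x : EuclideanSpace ℝ (Fin N)}

theorem hasFDerivAt (hu : IsStrongSolution p q G u) (hG : IsOpen G) (hx : x ∈ G) :
    HasFDerivAt u (innerSL ℝ (gradient u x)) x :=
  ((hu.1.differentiableOn one_ne_zero).differentiableAt (hG.mem_nhds hx)).hasGradientAt.hasFDerivAt

theorem continuousOn_gradient (hu : IsStrongSolution p q G u) (hG : IsOpen G) :
    ContinuousOn (gradient u) G :=
  (InnerProductSpace.toDual ℝ (EuclideanSpace ℝ (Fin N))).symm.continuous.comp_continuousOn
    (hu.1.continuousOn_fderiv_of_isOpen hG le_rfl)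

theorem differentiableAt_gradient (hu : IsStrongSolution p q G u) (hG : IsOpen G) (hx : x ∈ G)
    (hx0 : gradient u x ≠ 0) : DifferentiableAt ℝ (gradient u) x := by
  have hopen : IsOpen {x | x ∈ G ∧ gradient u x ≠ 0} :=
    (hu.continuousOn_gradient hG).isOpen_inter_preimage hG isOpen_compl_singleton
  have hfderiv : DifferentiableAt ℝ (fderiv ℝ u) x :=
    ((hu.2.1.contDiffAt (hopen.mem_nhds ⟨hx, hx0⟩)).fderiv_right (m := 1)
      (by norm_num)).differentiableAt one_ne_zero
  exact (InnerProductSpace.toDual ℝ (EuclideanSpace ℝ (Fin N))).symm.toContinuousLinearEquiv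
    |>.differentiableAt.comp x hfderiv

theorem isNondivSolution (hu : IsStrongSolution p q G u) (hp : 1 ≤ p) (hG : IsOpen G) :
    IsNondivSolution p (fun P => ‖P‖ ^ (q - p + 2)) u G := by
  refine fun x hx => ⟨gradient u x, hu.hasFDerivAt hG hx, fun hP => ?_⟩
  have hT := (hu.differentiableAt_gradient hG hx hP).hasFDerivAt
  refine ⟨innerForm _ ∘L fderiv ℝ (gradient u) x, .of_hasFDerivAt
    (f' := fun y => innerSL ℝ (gradient u y)) ?_ ((hasFDerivAt_innerForm _).comp x hT), ?_⟩
  · filter_upwards [hG.mem_nhds hx] with y hy using hu.hasFDerivAt hG hy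
  · have hPpos : 0 < ‖gradient u x‖ := norm_pos_iff.2 hP
    refine mul_left_cancel₀ (Real.rpow_pos_of_pos hPpos (p - 2)).ne' ?_
    rw [← trace_fderiv_norm_rpow_smul hp hT hP, ← Real.rpow_add hPpos]
    exact (hu.2.2 x hx).2.trans (by ring_nf)

theorem isBoundedSolution (hu : IsStrongSolution p q G u) (hp : 1 ≤ p) (hG : IsOpen G)
    {S : Set (EuclideanSpace ℝ (Fin N))} (hS : S ⊆ G) {b : ℝ} (hb : ∀ z ∈ S, |u z| ≤ b) :
    IsBoundedSolution p (q - p + 2) 1 b u (gradient u) S where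
  solution := by simpa only [one_mul] using (hu.isNondivSolution hp hG).mono hS
  hasFDerivAt _ hz := hu.hasFDerivAt hG (hS hz)
  continuousOn := (hu.continuousOn_gradient hG).mono hS
  abs_le := hb

theorem isBoundedSolution_rescale (hu : IsStrongSolution p q G u) (hp : 1 ≤ p) (hG : IsOpen G)
    {R b : ℝ} (hR : 0 < R) (hb : 0 < b) (hxG : ball x R ⊆ G) (hub : ∀ z ∈ ball x R, |u z| ≤ b) :
    IsBoundedSolution p (q - p + 2) (b ^ (q + 1 - p) * R ^ (p - q)) 1
      (fun y => b⁻¹ * u (x + R • y)) (fun y => (b⁻¹ * R) • gradient u (x + R • y)) (ball 0 1) := by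
  have h := (hu.isBoundedSolution hp hG hxG hub).rescale x (inv_pos.2 hb) hR
    fun y hy => add_smul_mem_ball x hR hy
  rw [inv_mul_cancel₀ hb.ne', one_mul, Real.inv_rpow hb.le, ← Real.rpow_neg hb.le] at h
  convert h using 3 <;> ring

theorem exists_interior_estimate (N : ℕ) {Λ : ℝ} (hp : 1 < p) (hq : p - 1 < q) (hqp : q < p)
    (hΛ : 0 ≤ Λ) :
    ∃ C > 0, ∃ α ∈ Ioo (0 : ℝ) 1, ∀ (G : Set (EuclideanSpace ℝ (Fin N)))
      (u : EuclideanSpace ℝ (Fin N) → ℝ), IsOpen G → IsStrongSolution p q G u →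
      ∀ (x : EuclideanSpace ℝ (Fin N)) (R b : ℝ), 0 < R → 0 < b → ball x R ⊆ G →
        (∀ z ∈ ball x R, |u z| ≤ b) → b ^ (q + 1 - p) * R ^ (p - q) ≤ Λ →
        ‖gradient u x‖ ≤ C * b * R⁻¹ ∧ ∀ x', ‖x' - x‖ < R / 2 →
          ‖gradient u x' - gradient u x‖ ≤ C * b * R⁻¹ * (‖x' - x‖ / R) ^ α := by
  obtain ⟨A, hA⟩ := exists_isEllipticityConstant (E := EuclideanSpace ℝ (Fin N)) hp
  obtain ⟨C, hC, α, hα, hlocal⟩ := IsBoundedSolution.exists_local_estimate hA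
    (show q - p + 2 ∈ Ico 1 2 from ⟨by linarith, by linarith⟩) hΛ
  refine ⟨C, hC, α, hα, fun G u hG hu x R b hR hb hxG hub hbΛ => ?_⟩
  obtain ⟨hbound, hholder⟩ := hlocal _ _ _ (by positivity) hbΛ
    (hu.isBoundedSolution_rescale hp.le hG hR hb hxG hub)
  have hbR : 0 < b⁻¹ * R := by positivity
  simp only [smul_zero, add_zero, ← smul_sub, norm_smul, Real.norm_of_nonneg hbR.le]
    at hbound hholder
  have hunscale : ∀ {t B : ℝ}, b⁻¹ * R * t ≤ C * B → t ≤ C * b * R⁻¹ * B := fun {t B} h => by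
    calc t = b * R⁻¹ * (b⁻¹ * R * t) := by field_simp
      _ ≤ b * R⁻¹ * (C * B) := by gcongr
      _ = C * b * R⁻¹ * B := by ring
  refine ⟨?_, fun x' hx' => ?_⟩
  · have h := hbound 0 (by simp)
    rw [smul_zero, add_zero, ← mul_one C] at h
    simpa only [mul_one] using hunscale h
  · have hy : ‖R⁻¹ • (x' - x)‖ = ‖x' - x‖ / R := by
      rw [norm_smul, norm_inv, Real.norm_of_nonneg hR.le, inv_mul_eq_div]
    have h := hholder (R⁻¹ • (x' - x)) (by rwa [hy, div_lt_iff₀ hR, one_div_mul_eq_div])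
    rw [smul_inv_smul₀ hR.ne', add_sub_cancel, hy] at h
    exact hunscale h

end IsStrongSolution

section IsolatedSingularity

/-- The bounds `φ` allowed near an isolated singularity: `φ` is positive and nonincreasing on
`(0, 1]`, doubling with constant `a`, and `r ^ β * φ r ≤ c` there. -/
structure IsAdmissibleBound (a c β : ℝ) (φ : ℝ → ℝ) : Prop where
  antitoneOn : AntitoneOn φ (Ioc 0 1)
  pos : ∀ r ∈ Ioc (0 : ℝ) 1, 0 < φ r
  doubling : ∀ r : ℝ, 0 < r → r ≤ 1 / 2 → φ r ≤ a * φ (2 * r)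
  growth : ∀ r ∈ Ioc (0 : ℝ) 1, r ^ β * φ r ≤ c

namespace IsAdmissibleBound

variable {a c β p q : ℝ} {φ : ℝ → ℝ}

theorem le_mul_of_half_le (hφ : IsAdmissibleBound a c β φ) {r t : ℝ} (hr : r ∈ Ioc (0 : ℝ) 1)
    (ht : r / 2 ≤ t) (ht1 : t ≤ 1) : φ t ≤ a * φ r := by
  have hr2 : 0 < r / 2 := half_pos hr.1
  have hle := hφ.doubling (r / 2) hr2 (by linarith [hr.2])
  rw [mul_div_cancel₀ _ two_ne_zero] at hle
  exact (hφ.antitoneOn ⟨hr2, by linarith⟩ ⟨hr2.trans_le ht, ht1⟩ ht).trans hle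

theorem rpow_mul_rpow_le (hφ : IsAdmissibleBound a c ((p - q) / (q + 1 - p)) φ) (ha : 0 ≤ a)
    (hq : p - 1 < q) (hqp : q ≤ p) {r : ℝ} (hr : r ∈ Ioc (0 : ℝ) 1) :
    (a * φ r) ^ (q + 1 - p) * (r / 2) ^ (p - q) ≤ (a * c) ^ (q + 1 - p) := by
  have hs : 0 < q + 1 - p := by linarith
  have hr0 := hr.1
  have hφr := hφ.pos r hr
  rw [← div_mul_cancel₀ (p - q) hs.ne', Real.rpow_mul (by positivity),
    ← Real.mul_rpow (by positivity) (by positivity)]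
  refine Real.rpow_le_rpow (by positivity) ?_ hs.le
  calc a * φ r * (r / 2) ^ ((p - q) / (q + 1 - p)) ≤ a * φ r * r ^ ((p - q) / (q + 1 - p)) := by
        gcongr
        exact half_le_self hr0.le
    _ = a * (r ^ ((p - q) / (q + 1 - p)) * φ r) := by ring
    _ ≤ a * c := mul_le_mul_of_nonneg_left (hφ.growth r hr) ha

end IsAdmissibleBound

theorem norm_sub_le_of_norm_le_of_near {F : Type*} [SeminormedAddCommGroup F] {P Q : F}
    {m t α : ℝ} (hα : α ∈ Icc (0 : ℝ) 1) (ht : 0 ≤ t) (hP : ‖P‖ ≤ m) (hQ : ‖Q‖ ≤ m)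
    (hnear : t < 1 / 4 → ‖Q - P‖ ≤ m * t ^ α) : ‖Q - P‖ ≤ 8 * (m * t ^ α) := by
  have hm : 0 ≤ m := (norm_nonneg P).trans hP
  rcases lt_or_ge t (1 / 4) with h | h
  · have : 0 ≤ m * t ^ α := by positivity
    linarith [hnear h]
  · have hpow : 1 / 4 ≤ t ^ α := calc
      (1 / 4 : ℝ) ≤ (1 / 4) ^ α := Real.self_le_rpow_of_le_one (by norm_num) (by norm_num) hα.2
      _ ≤ t ^ α := Real.rpow_le_rpow (by norm_num) h hα.1
    calc ‖Q - P‖ ≤ m + m := (norm_sub_le Q P).trans (add_le_add hQ hP)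
      _ = 8 * (m * (1 / 4)) := by ring
      _ ≤ 8 * (m * t ^ α) := by gcongr

theorem ball_half_norm_subset {E : Type*} [NormedAddCommGroup E] {x : E} (hx : ‖x‖ ≤ 1 / 2) :
    ball x (‖x‖ / 2) ⊆ {z | ‖x‖ / 2 < ‖z‖ ∧ ‖z‖ < 1} := fun z hz => by
  rw [mem_ball_iff_norm] at hz
  exact ⟨by linarith [norm_le_norm_add_norm_sub z x], by linarith [norm_le_norm_add_norm_sub' z x]⟩

theorem exists_near_estimate (N : ℕ) {p q a c₀ : ℝ} (hp : 1 < p) (hq : p - 1 < q) (hqp : q < p)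
    (ha : 0 < a) (hc₀ : 0 ≤ c₀) :
    ∃ C > 0, ∃ α ∈ Ioo (0 : ℝ) 1, ∀ φ, IsAdmissibleBound a c₀ ((p - q) / (q + 1 - p)) φ →
      ∀ u : EuclideanSpace ℝ (Fin N) → ℝ, IsStrongSolution p q (ball 0 1 \ {0}) u →
        (∀ x, 0 < ‖x‖ → ‖x‖ < 1 → |u x| ≤ φ ‖x‖) → ∀ x, 0 < ‖x‖ → ‖x‖ ≤ 1 / 2 →
          ‖gradient u x‖ ≤ C * φ ‖x‖ * ‖x‖⁻¹ ∧ ∀ x', ‖x' - x‖ / ‖x‖ < 1 / 4 →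
            ‖gradient u x' - gradient u x‖ ≤ C * φ ‖x‖ * ‖x‖⁻¹ * (‖x' - x‖ / ‖x‖) ^ α := by
  obtain ⟨C, hC, α, hα, hest⟩ := IsStrongSolution.exists_interior_estimate N hp hq hqp
    (show 0 ≤ (a * c₀) ^ (q + 1 - p) by positivity)
  refine ⟨4 * C * a, by positivity, α, hα, fun φ hφ u hu hub x hx hx2 => ?_⟩
  have hr : ‖x‖ ∈ Ioc (0 : ℝ) 1 := ⟨hx, by linarith⟩
  have hφx := hφ.pos _ hr
  have hball := ball_half_norm_subset hx2
  obtain ⟨hbound, hholder⟩ := hest _ u (isOpen_ball.sdiff isClosed_singleton) hu x (‖x‖ / 2)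
    (a * φ ‖x‖) (half_pos hx) (mul_pos ha hφx)
    (fun z hz => ⟨mem_ball_zero_iff.2 (hball hz).2,
      norm_pos_iff.1 ((half_pos hx).trans (hball hz).1)⟩)
    (fun z hz => (hub z ((half_pos hx).trans (hball hz).1) (hball hz).2).trans
      (hφ.le_mul_of_half_le hr (hball hz).1.le (hball hz).2.le))
    (hφ.rpow_mul_rpow_le ha.le hq hqp.le hr)
  have hscale : C * (a * φ ‖x‖) * (‖x‖ / 2)⁻¹ = 2 * (C * a * φ ‖x‖ * ‖x‖⁻¹) := by
    field_simp
  have hm : 0 ≤ C * a * φ ‖x‖ * ‖x‖⁻¹ := by positivity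
  rw [hscale] at hbound hholder
  refine ⟨by linarith, fun x' hx' => ?_⟩
  rw [div_lt_iff₀ hx] at hx'
  calc ‖gradient u x' - gradient u x‖
      ≤ 2 * (C * a * φ ‖x‖ * ‖x‖⁻¹) * (‖x' - x‖ / (‖x‖ / 2)) ^ α := hholder x' (by linarith)
    _ ≤ 2 * (C * a * φ ‖x‖ * ‖x‖⁻¹) * (2 * (‖x' - x‖ / ‖x‖) ^ α) := by
      rw [div_div_eq_mul_div, mul_comm ‖x' - x‖, mul_div_assoc]
      gcongr
      exact two_mul_rpow_le (by positivity) hα.2.le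
    _ = 4 * C * a * φ ‖x‖ * ‖x‖⁻¹ * (‖x' - x‖ / ‖x‖) ^ α := by ring

theorem lt_of_lt_mul_sub_one_div {n p q : ℝ} (hn : 1 < n) (hpn : p ≤ n)
    (hq : q < n * (p - 1) / (n - 1)) : q < p := by
  refine hq.trans_le ?_
  rw [div_le_iff₀ (by linarith)]
  linarith

end IsolatedSingularity

theorem gradient_holder_estimate_general (N : ℕ) (p q : ℝ) (hp : 1 < p) (hq : p - 1 < q)
    (hqp : q < p) (a c₀ : ℝ) (ha : 0 < a) (hc₀ : 0 ≤ c₀) :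
    ∃ C : ℝ, 0 < C ∧ ∃ α ∈ Ioo (0 : ℝ) 1,
      ∀ φ : ℝ → ℝ, IsAdmissibleBound a c₀ ((p - q) / (q + 1 - p)) φ →
        ∀ u : EuclideanSpace ℝ (Fin N) → ℝ,
          IsStrongSolution p q (ball (0 : EuclideanSpace ℝ (Fin N)) 1 \ {0}) u →
          (∀ x : EuclideanSpace ℝ (Fin N), 0 < ‖x‖ → ‖x‖ < 1 → |u x| ≤ φ ‖x‖) →
          (∀ x : EuclideanSpace ℝ (Fin N), 0 < ‖x‖ → ‖x‖ ≤ 1 / 2 →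
            ‖gradient u x‖ ≤ C * φ ‖x‖ * ‖x‖⁻¹) ∧
          (∀ x x' : EuclideanSpace ℝ (Fin N), 0 < ‖x‖ → ‖x‖ ≤ ‖x'‖ → ‖x'‖ ≤ 1 / 2 →
            ‖gradient u x - gradient u x'‖ ≤ C * φ ‖x‖ * ‖x‖ ^ (-(1 + α)) * ‖x - x'‖ ^ α) := by
  obtain ⟨C, hC, α, hα, hnear⟩ := exists_near_estimate N hp hq hqp ha hc₀
  refine ⟨8 * C, by positivity, α, hα, fun φ hφ u hu hub => ⟨fun x hx hx2 => ?_,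
    fun x x' hx hxx' hx' => ?_⟩⟩
  · have hφx := hφ.pos ‖x‖ ⟨hx, by linarith⟩
    refine (hnear φ hφ u hu hub x hx hx2).1.trans ?_
    gcongr
    linarith
  · have hx0' : 0 < ‖x'‖ := hx.trans_le hxx'
    have hφle : φ ‖x'‖ ≤ φ ‖x‖ := hφ.antitoneOn ⟨hx, by linarith⟩ ⟨hx0', by linarith⟩ hxx'
    have : 0 < φ ‖x‖ := hφ.pos ‖x‖ ⟨hx, by linarith⟩
    obtain ⟨hbound, hholder⟩ := hnear φ hφ u hu hub x hx (hxx'.trans hx')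
    have hbound' : ‖gradient u x'‖ ≤ C * φ ‖x‖ * ‖x‖⁻¹ :=
      (hnear φ hφ u hu hub x' hx0' hx').1.trans (by gcongr)
    rw [norm_sub_rev, norm_sub_rev x x']
    calc ‖gradient u x' - gradient u x‖
        ≤ 8 * (C * φ ‖x‖ * ‖x‖⁻¹ * (‖x' - x‖ / ‖x‖) ^ α) :=
          norm_sub_le_of_norm_le_of_near ⟨hα.1.le, hα.2.le⟩ (by positivity) hbound hbound'
            (hholder x')
      _ = 8 * C * φ ‖x‖ * ‖x‖ ^ (-(1 + α)) * ‖x' - x‖ ^ α := by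
        rw [Real.div_rpow (norm_nonneg _) hx.le, neg_add, Real.rpow_add hx, Real.rpow_neg_one,
          Real.rpow_neg hx.le α]
        ring

/-- Weighted gradient and Hölder estimates near an isolated singularity. -/
theorem gradient_holder_estimate (N : ℕ) (hN : 2 ≤ N) (p q : ℝ) (hp1 : 1 < p) (hpN : p ≤ N)
    (hq1 : p - 1 < q) (hq2 : q < (N : ℝ) * (p - 1) / ((N : ℝ) - 1))
    (a c₀ : ℝ) (ha : 0 < a) (hc₀ : 0 < c₀) :
    ∃ C : ℝ, 0 < C ∧ ∃ α ∈ Set.Ioo (0 : ℝ) 1,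
      ∀ φ : ℝ → ℝ, ContinuousOn φ (Set.Ioc 0 1) → AntitoneOn φ (Set.Ioc 0 1) →
        (∀ r ∈ Set.Ioc (0 : ℝ) 1, 0 < φ r) →
        (∀ r : ℝ, 0 < r → r ≤ 1 / 2 → φ r ≤ a * φ (2 * r)) →
        (∀ r ∈ Set.Ioc (0 : ℝ) 1, r ^ ((p - q) / (q + 1 - p)) * φ r ≤ c₀) →
        ∀ u : EuclideanSpace ℝ (Fin N) → ℝ,
          IsStrongSolution p q (Metric.ball (0 : EuclideanSpace ℝ (Fin N)) 1 \ {0}) u →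
          (∀ x : EuclideanSpace ℝ (Fin N), 0 < ‖x‖ → ‖x‖ < 1 → |u x| ≤ φ ‖x‖) →
          (∀ x : EuclideanSpace ℝ (Fin N), 0 < ‖x‖ → ‖x‖ ≤ 1 / 2 →
            ‖gradient u x‖ ≤ C * φ ‖x‖ * ‖x‖⁻¹) ∧
          (∀ x x' : EuclideanSpace ℝ (Fin N), 0 < ‖x‖ → ‖x‖ ≤ ‖x'‖ → ‖x'‖ ≤ 1 / 2 →
            ‖gradient u x - gradient u x'‖ ≤ C * φ ‖x‖ * ‖x‖ ^ (-(1 + α)) * ‖x - x'‖ ^ α) := by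
  obtain ⟨C, hC, α, hα, h⟩ := gradient_holder_estimate_general N p q hp1 hq1
    (lt_of_lt_mul_sub_one_div (by exact_mod_cast hN) hpN hq2) a c₀ ha hc₀.le
  exact ⟨C, hC, α, hα, fun φ _ hanti hpos hdbl hgrowth => h φ ⟨hanti, hpos, hdbl, hgrowth⟩⟩
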